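/- arXiv:1909.03668 — 7 statements merged into one kernel-verified Lean document; each statement's English description precedes it below -/
import Mathlib

section
/- For all real δ ≥ 0 and D ≥ 1 there exists a constant X₀ ≥ 0, depending only on δ and D, with the following property. Let E be a metric space such that (i) any two points u, v ∈ E are joined by a geodesic, i.e. there is f : [0, dist(u,v)] → E with f(0) = u, f(dist(u,v)) = v and dist(f(s), f(t)) = |s − t| for all s, t; and (ii) for every basepoint p ∈ E and all a, b, c ∈ E, (a·c)_p ≥ min((a·b)_p, (b·c)_p) − 2δ. Let γ, w ∈ E, K ∈ ℝ, T ≥ 0, and let q : [0,T] → E be a D-quasi-geodesic, i.e. D⁻¹|s − t| − D ≤ dist(q(s), q(t)) ≤ D|s − t| + D for all s, t ∈ [0,T]. If (w·q(0))_γ ≥ K and (w·q(T))_γ ≥ K, then (w·q(s))_γ ≥ K − X₀ for every s ∈ [0,T]. -/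
/-!
A point at distance `u` from `a` on a geodesic from `a` to `b` in a tree has distance
`max (dist a x - u) (dist b x - (dist a b - u))` to `x`. This function makes sense in any
hyperbolic space, and being a maximum of shifted distance functions it satisfies the four-point
inequality with the same constant, so it can replace the distance to a geodesic that need not exist.

Suppose a quasi-geodesic from `a` to `b` stays at distance about `r` from such a virtual point, with
`r` nearly maximal. Two of its points, one on each side of the virtual point, are at distance at
most `4 * r + 2 * δ`, hence are joined by `2 ^ k` short steps of the quasi-geodesic with `k` of the
order of `log r`. Iterated bisection then makes their Gromov product at the virtual point at least
`r - O(log r)`, whereas it is at most `δ` because the two points lie on opposite sides; so `r` is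
bounded. As the virtual geodesic is connected, every point of the quasi-geodesic is in turn close to
it, i.e. has a bounded Gromov product of `a` and `b`, and the theorem is one more application of
hyperbolicity.
-/

open Set Filter Asymptotics

universe u

section Growth

theorem eventually_linear_le_two_pow (a b : ℝ) : ∀ᶠ k : ℕ in atTop, a * k + b ≤ 2 ^ k := by
  have linear : (fun k : ℕ ↦ a * (k : ℝ)) =o[atTop] fun k ↦ (2 : ℝ) ^ k :=
    (isLittleO_coe_const_pow_of_one_lt one_lt_two).const_mul_left a
  have const : (fun _ : ℕ ↦ b) =o[atTop] fun k ↦ (2 : ℝ) ^ k :=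
    isLittleO_const_left.2 (.inr (tendsto_norm_atTop_atTop.comp
      (tendsto_pow_atTop_atTop_of_one_lt one_lt_two)))
  filter_upwards [(linear.add const).bound one_pos] with k hk
  simpa using (le_abs_self _).trans hk

theorem exists_bound_of_le_add_mul_of_linear_le_two_pow {A : ℝ} (hA : 0 ≤ A) (B C δ : ℝ) :
    ∃ H, ∀ r : ℝ, (∀ k : ℕ, A * r + B ≤ 2 ^ k → r ≤ C + k * δ) → r ≤ H := by
  obtain ⟨k₀, hk₀⟩ := eventually_atTop.1
    (eventually_linear_le_two_pow (A * δ) (A * (C + δ) + B))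
  refine ⟨C + k₀ * δ, fun r hr ↦ ?_⟩
  by_contra! hlt
  have lt_of_ge : ∀ k ≥ k₀, C + k * δ < r := by
    refine Nat.le_induction hlt fun k hk ih ↦ ?_
    contrapose! ih
    push_cast at ih
    refine hr k ?_
    calc A * r + B ≤ A * (C + (k + 1) * δ) + B := by gcongr
      _ = A * δ * k + (A * (C + δ) + B) := by ring
      _ ≤ 2 ^ k := hk₀ k hk
  obtain ⟨k, hk, hpow⟩ := ((eventually_ge_atTop k₀).and
    (eventually_linear_le_two_pow 0 (A * r + B))).exists
  exact (lt_of_ge k hk).not_ge (hr k (by linarith))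

end Growth

theorem nonempty_inter_closure_inter_closure_of_isPreconnected {X : Type*} [TopologicalSpace X]
    {C S S' : Set X} (hC : IsPreconnected C) (hcover : C ⊆ S ∪ S') (hS : (C ∩ S).Nonempty)
    (hS' : (C ∩ S').Nonempty) : (C ∩ (closure S ∩ closure S')).Nonempty :=
  isPreconnected_closed_iff.1 hC _ _ isClosed_closure isClosed_closure
    (hcover.trans (union_subset_union subset_closure subset_closure))
    (hS.mono (inter_subset_inter_right C subset_closure))
    (hS'.mono (inter_subset_inter_right C subset_closure))

variable {E : Type u} [PseudoMetricSpace E]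

/-- The Gromov product of `x` and `y` with respect to a function `φ`, which stands for the distance
to a basepoint: `gromovProduct (dist p) x y` is the usual Gromov product at `p`. -/
noncomputable def gromovProduct (φ : E → ℝ) (x y : E) : ℝ :=
  (φ x + φ y - dist x y) / 2

/-- Gromov's inequality at a single basepoint, given by its distance function `φ`. -/
def IsHyperbolicFrom (δ : ℝ) (φ : E → ℝ) : Prop :=
  ∀ a b c, min (gromovProduct φ a b) (gromovProduct φ b c) - δ ≤ gromovProduct φ a c

/-- Gromov hyperbolicity of a metric space: Gromov's inequality at every basepoint. -/
def IsGromovHyperbolic (E : Type u) [PseudoMetricSpace E] (δ : ℝ) : Prop :=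
  ∀ p : E, IsHyperbolicFrom δ (dist p)

/-- A `D`-quasi-geodesic parametrised by a set of reals, with `D` both the multiplicative and the
additive constant. -/
def IsQuasiGeodesicOn (D : ℝ) (q : ℝ → E) (S : Set ℝ) : Prop :=
  ∀ s ∈ S, ∀ t ∈ S,
    D⁻¹ * |s - t| - D ≤ dist (q s) (q t) ∧ dist (q s) (q t) ≤ D * |s - t| + D

/-- The distance from `x` to the point at distance `u` from `a` on a virtual geodesic from `a` to
`b`, as it would be in a tree. -/
noncomputable def geodesicPointDist (a b : E) (u : ℝ) (x : E) : ℝ :=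
  max (dist a x - u) (dist b x - (dist a b - u))

/-- Every point of the virtual geodesic from `a` to `b` is within `r` of the set `P`. -/
def ShadowsGeodesic (P : Set E) (a b : E) (r : ℝ) : Prop :=
  ∀ u ∈ Icc 0 (dist a b), ∃ x ∈ P, geodesicPointDist a b u x ≤ r

variable {δ D r : ℝ} {φ ψ : E → ℝ} {a b x y : E} {P : Set E} {q : ℝ → E}

theorem gromovProduct_comm (φ : E → ℝ) (x y : E) : gromovProduct φ x y = gromovProduct φ y x := by
  rw [gromovProduct, gromovProduct, dist_comm, add_comm (φ x)]

theorem gromovProduct_dist_le_add (p w x y : E) :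
    gromovProduct (dist p) w x ≤ gromovProduct (dist p) w y + gromovProduct (dist y) x w := by
  simp only [gromovProduct]
  linarith [dist_triangle p y x, dist_comm w x, dist_comm w y]

theorem isHyperbolicFrom_iff_add_dist_le :
    IsHyperbolicFrom δ φ ↔
      ∀ a b c, φ b + dist a c ≤ max (φ a + dist b c) (φ c + dist a b) + 2 * δ := by
  refine forall₃_congr fun a b c ↦ ?_
  simp only [gromovProduct, sub_le_iff_le_add, min_le_iff, ← max_add_add_right, le_max_iff]
  rw [or_comm]
  refine or_congr ?_ ?_ <;> constructor <;> intro h <;> linarith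

namespace IsHyperbolicFrom

theorem sup (hφ : IsHyperbolicFrom δ φ) (hψ : IsHyperbolicFrom δ ψ) :
    IsHyperbolicFrom δ (φ ⊔ ψ) := by
  rw [isHyperbolicFrom_iff_add_dist_le] at *
  intro a b c
  have mono {χ : E → ℝ} (hχ : χ ≤ φ ⊔ ψ) :
      max (χ a + dist b c) (χ c + dist a b) ≤
        max ((φ ⊔ ψ) a + dist b c) ((φ ⊔ ψ) c + dist a b) := by
    gcongr <;> apply hχ
  rcases max_choice (φ b) (ψ b) with hb | hb <;> rw [Pi.sup_apply, hb]
  · linarith [hφ a b c, mono le_sup_left]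
  · linarith [hψ a b c, mono le_sup_right]

theorem sub_const (hφ : IsHyperbolicFrom δ φ) (c : ℝ) : IsHyperbolicFrom δ fun x ↦ φ x - c := by
  rw [isHyperbolicFrom_iff_add_dist_le] at *
  intro x y z
  simpa only [sub_add_eq_add_sub, max_sub_sub_right, sub_le_sub_iff_right] using hφ x y z

theorem le_gromovProduct_of_chain (hφ : IsHyperbolicFrom δ φ) {c : ℝ} (k : ℕ) (x : ℕ → E)
    (hx : ∀ i < 2 ^ k, c ≤ gromovProduct φ (x i) (x (i + 1))) :
    c - k * δ ≤ gromovProduct φ (x 0) (x (2 ^ k)) := by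
  induction k generalizing x with
  | zero => simpa using hx 0 one_pos
  | succ k ih =>
    rw [pow_succ, mul_two] at hx ⊢
    have first_half := ih x fun i hi ↦ hx i (by lia)
    have second_half := ih (fun i ↦ x (2 ^ k + i)) fun i hi ↦ hx (2 ^ k + i) (by lia)
    rw [add_zero] at second_half
    have combined := hφ (x 0) (x (2 ^ k)) (x (2 ^ k + 2 ^ k))
    push_cast
    linarith [le_min first_half second_half]

end IsHyperbolicFrom

namespace IsQuasiGeodesicOn

theorem abs_sub_le {S : Set ℝ} (hq : IsQuasiGeodesicOn D q S) (hD : 0 < D) {s t : ℝ} (hs : s ∈ S)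
    (ht : t ∈ S) : |s - t| ≤ D * (dist (q s) (q t) + D) := by
  rw [← inv_mul_le_iff₀ hD]
  linarith [(hq s hs t ht).1]

theorem le_gromovProduct_of_forall_le {S : Set ℝ} (hq : IsQuasiGeodesicOn D q S) (hD : 0 ≤ D)
    (hS : Convex ℝ S) (hφ : IsHyperbolicFrom δ φ) (hr : ∀ t ∈ S, r ≤ φ (q t)) {s t : ℝ}
    (hs : s ∈ S) (ht : t ∈ S) {k : ℕ} (hk : |s - t| ≤ 2 ^ k) :
    r - D - k * δ ≤ gromovProduct φ (q s) (q t) := by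
  let τ (i : ℕ) : ℝ := AffineMap.lineMap s t (i / 2 ^ k : ℝ)
  have mem {i : ℕ} (hi : i ≤ 2 ^ k) : τ i ∈ S :=
    hS.lineMap_mem hs ht ⟨by positivity, (div_le_one (by positivity)).2 (by exact_mod_cast hi)⟩
  have param (i : ℕ) : dist (i / 2 ^ k : ℝ) ((i + 1 : ℕ) / 2 ^ k) = 1 / 2 ^ k := by
    rw [Real.dist_eq, ← sub_div, abs_div, abs_of_pos (by positivity : (0 : ℝ) < 2 ^ k)]
    simp
  have step (i : ℕ) : |τ i - τ (i + 1)| ≤ 1 := by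
    rw [← Real.dist_eq, dist_lineMap_lineMap, param, one_div_mul_eq_div, Real.dist_eq]
    exact (div_le_one (by positivity)).2 hk
  have chain := hφ.le_gromovProduct_of_chain (c := r - D) k (fun i ↦ q (τ i)) fun i hi ↦ by
    have hdist := (hq _ (mem hi.le) _ (mem hi)).2
    simp only [gromovProduct]
    linarith [hr _ (mem hi.le), hr _ (mem hi), mul_le_mul_of_nonneg_left (step i) hD]
  simpa [τ] using chain

end IsQuasiGeodesicOn

theorem geodesicPointDist_comm (a b : E) (u : ℝ) :
    geodesicPointDist b a (dist a b - u) = geodesicPointDist a b u := by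
  ext x
  rw [geodesicPointDist, geodesicPointDist, max_comm, dist_comm b a, sub_sub_cancel]

theorem dist_left_sub_le_geodesicPointDist (a b x : E) (u : ℝ) :
    dist a x - u ≤ geodesicPointDist a b u x :=
  le_max_left _ _

theorem dist_right_sub_le_geodesicPointDist (a b x : E) (u : ℝ) :
    dist b x - (dist a b - u) ≤ geodesicPointDist a b u x :=
  le_max_right _ _

theorem gromovProduct_le_geodesicPointDist (a b x : E) (u : ℝ) :
    gromovProduct (dist x) a b ≤ geodesicPointDist a b u x := by
  rw [gromovProduct, dist_comm x a, dist_comm x b]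
  linarith [dist_left_sub_le_geodesicPointDist a b x u, dist_right_sub_le_geodesicPointDist a b x u]

theorem geodesicPointDist_nonneg (a b x : E) (u : ℝ) : 0 ≤ geodesicPointDist a b u x := by
  have := gromovProduct_le_geodesicPointDist a b x u
  rw [gromovProduct] at this
  linarith [dist_triangle_left a b x]

theorem geodesicPointDist_le_add (a b x y : E) (u v : ℝ) :
    geodesicPointDist a b u x ≤ geodesicPointDist a b v y + |u - v| + dist x y := by
  refine max_le ?_ ?_
  · linarith [neg_abs_le (u - v), dist_triangle_right a x y,
      dist_left_sub_le_geodesicPointDist a b y v]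
  · linarith [le_abs_self (u - v), dist_triangle_right b x y,
      dist_right_sub_le_geodesicPointDist a b y v]

namespace IsGromovHyperbolic

theorem isHyperbolicFrom_geodesicPointDist (hE : IsGromovHyperbolic E δ) (a b : E) (u : ℝ) :
    IsHyperbolicFrom δ (geodesicPointDist a b u) :=
  ((hE a).sub_const u).sup ((hE b).sub_const (dist a b - u))

theorem dist_le_geodesicPointDist_add (hE : IsGromovHyperbolic E δ) (a b x y : E) (u : ℝ) :
    dist x y ≤ geodesicPointDist a b u x + geodesicPointDist a b u y + 2 * δ := by
  have four_point : dist a b + dist x y ≤ max (dist a x + dist b y) (dist a y + dist x b) + 2 * δ :=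
    isHyperbolicFrom_iff_add_dist_le.1 (hE a) x b y
  have hax := dist_left_sub_le_geodesicPointDist a b x u
  have hay := dist_left_sub_le_geodesicPointDist a b y u
  have hbx := dist_right_sub_le_geodesicPointDist a b x u
  have hby := dist_right_sub_le_geodesicPointDist a b y u
  have hmax : max (dist a x + dist b y) (dist a y + dist x b) ≤
      geodesicPointDist a b u x + geodesicPointDist a b u y + dist a b :=
    max_le (by linarith) (by linarith [dist_comm x b])
  linarith

theorem gromovProduct_geodesicPointDist_le (hE : IsGromovHyperbolic E δ) {u : ℝ}
    (hx : dist a x ≤ u) (hy : dist b y ≤ dist a b - u) :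
    gromovProduct (geodesicPointDist a b u) x y ≤ δ := by
  have hφx : geodesicPointDist a b u x = dist b x - (dist a b - u) :=
    max_eq_right (by linarith [dist_triangle_right a b x])
  have hφy : geodesicPointDist a b u y = dist a y - u :=
    max_eq_left (by linarith [dist_triangle_right a b y])
  have four_point : dist a y + dist x b ≤ max (dist a x + dist y b) (dist a b + dist x y) + 2 * δ :=
    isHyperbolicFrom_iff_add_dist_le.1 (hE a) x y b
  have hmax : max (dist a x + dist y b) (dist a b + dist x y) = dist a b + dist x y :=
    max_eq_right (by linarith [dist_comm b y, dist_nonneg (x := x) (y := y)])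
  rw [gromovProduct, hφx, hφy]
  linarith [dist_comm b x]

end IsGromovHyperbolic

namespace ShadowsGeodesic

theorem nonneg (hP : ShadowsGeodesic P a b r) : 0 ≤ r :=
  let ⟨x, _, hx⟩ := hP 0 (left_mem_Icc.2 dist_nonneg)
  (geodesicPointDist_nonneg a b x 0).trans hx

theorem mono {r' : ℝ} (hP : ShadowsGeodesic P a b r) (hr : r ≤ r') : ShadowsGeodesic P a b r' :=
  fun u hu ↦ let ⟨x, hx, hxr⟩ := hP u hu; ⟨x, hx, hxr.trans hr⟩

theorem symm (hP : ShadowsGeodesic P a b r) : ShadowsGeodesic P b a r := by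
  intro u hu
  rw [dist_comm] at hu
  obtain ⟨x, hx, hxr⟩ := hP (dist a b - u) ⟨sub_nonneg.2 hu.2, sub_le_self _ hu.1⟩
  exact ⟨x, hx, by rwa [← geodesicPointDist_comm, sub_sub_cancel] at hxr⟩

theorem of_left_mem (ha : a ∈ P) : ShadowsGeodesic P a b (dist a b) := fun u hu ↦
  ⟨a, ha, max_le (by linarith [dist_self a, hu.1, dist_nonneg (x := a) (y := b)])
    (by linarith [dist_comm a b, hu.2])⟩

theorem exists_mem_dist_le (hP : ShadowsGeodesic P a b r) (ha : a ∈ P) {v : ℝ}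
    (hv : v ∈ Icc 0 (dist a b)) :
    ∃ x ∈ P, dist a x ≤ v ∧ geodesicPointDist a b v x ≤ 2 * r := by
  have hr := hP.nonneg
  by_cases hrv : r ≤ v
  · obtain ⟨x, hx, hxr⟩ := hP (v - r) ⟨sub_nonneg.2 hrv, by linarith [hv.2]⟩
    have hax := (le_max_left _ _).trans hxr
    have hlip := geodesicPointDist_le_add a b x x v (v - r)
    rw [sub_sub_cancel, abs_of_nonneg hr, dist_self] at hlip
    exact ⟨x, hx, by linarith, by linarith⟩
  · refine ⟨a, ha, by simpa using hv.1, max_le ?_ ?_⟩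
    · linarith [dist_self a, hv.1]
    · linarith [dist_comm a b]

theorem exists_shadows_not_shadows_sub_one (ha : a ∈ P) :
    ∃ r, ShadowsGeodesic P a b r ∧ ¬ ShadowsGeodesic P a b (r - 1) := by
  have bddBelow : BddBelow {r | ShadowsGeodesic P a b r} := ⟨0, fun _ hr ↦ hr.nonneg⟩
  obtain ⟨r, hr, hlt⟩ := exists_lt_of_csInf_lt
    (s := {r | ShadowsGeodesic P a b r}) ⟨_, of_left_mem ha⟩ (lt_add_one _)
  exact ⟨r, hr, fun h ↦ notMem_of_lt_csInf (sub_lt_iff_lt_add.2 hlt) bddBelow h⟩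

end ShadowsGeodesic

section Stability

variable {α β : ℝ}

theorem IsQuasiGeodesicOn.le_of_shadows_of_not_shadows_sub_one
    (hq : IsQuasiGeodesicOn D q (Icc α β)) (hD : 0 < D) (hE : IsGromovHyperbolic E δ)
    (hαβ : α ≤ β) (hr : ShadowsGeodesic (q '' Icc α β) (q α) (q β) r)
    (hr' : ¬ ShadowsGeodesic (q '' Icc α β) (q α) (q β) (r - 1)) {k : ℕ}
    (hk : D * 4 * r + D * (2 * δ + D) ≤ 2 ^ k) : r ≤ 1 + D + δ + k * δ := by
  simp only [ShadowsGeodesic, exists_mem_image] at hr'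
  push Not at hr'
  obtain ⟨v, hv, far⟩ := hr'
  obtain ⟨_, ⟨s, hs, rfl⟩, hαs, hφs⟩ := hr.exists_mem_dist_le ⟨α, left_mem_Icc.2 hαβ, rfl⟩ hv
  obtain ⟨_, ⟨t, ht, rfl⟩, hβt, hφt⟩ := hr.symm.exists_mem_dist_le
    ⟨β, right_mem_Icc.2 hαβ, rfl⟩ (v := dist (q α) (q β) - v)
    ⟨sub_nonneg.2 hv.2, by linarith [hv.1, dist_comm (q α) (q β)]⟩
  rw [geodesicPointDist_comm] at hφt
  have hst : |s - t| ≤ 2 ^ k := by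
    refine (hq.abs_sub_le hD hs ht).trans (le_trans ?_ hk)
    have := hE.dist_le_geodesicPointDist_add (q α) (q β) (q s) (q t) v
    calc D * (dist (q s) (q t) + D) ≤ D * (4 * r + 2 * δ + D) := by gcongr; linarith
      _ = D * 4 * r + D * (2 * δ + D) := by ring
  have lower := hq.le_gromovProduct_of_forall_le hD.le (convex_Icc α β)
    (hE.isHyperbolicFrom_geodesicPointDist (q α) (q β) v) (fun t ht ↦ (far t ht).le) hs ht hst
  have upper := hE.gromovProduct_geodesicPointDist_le hαs hβt
  linarith

theorem exists_shadowsGeodesic_of_isQuasiGeodesicOn (δ : ℝ) (hD : 0 < D) :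
    ∃ H, ∀ {E : Type u} [PseudoMetricSpace E], IsGromovHyperbolic E δ →
      ∀ {q : ℝ → E} {α β : ℝ}, α ≤ β → IsQuasiGeodesicOn D q (Icc α β) →
        ShadowsGeodesic (q '' Icc α β) (q α) (q β) H := by
  obtain ⟨H, hH⟩ := exists_bound_of_le_add_mul_of_linear_le_two_pow
    (show 0 ≤ D * 4 by positivity) (D * (2 * δ + D)) (1 + D + δ) δ
  refine ⟨H, fun hE q α β hαβ hq ↦ ?_⟩
  obtain ⟨r, hr, hr'⟩ := ShadowsGeodesic.exists_shadows_not_shadows_sub_one (b := q β)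
    (mem_image_of_mem q (left_mem_Icc.2 hαβ))
  exact hr.mono (hH r fun k hk ↦ hq.le_of_shadows_of_not_shadows_sub_one hD hE hαβ hr hr' hk)

theorem ShadowsGeodesic.exists_le_exists_ge {s : ℝ}
    (hr : ShadowsGeodesic (q '' Icc α β) (q α) (q β) r) (hs : s ∈ Icc α β) :
    ∃ u, ∃ t ∈ Icc α s, ∃ t' ∈ Icc s β, geodesicPointDist (q α) (q β) u (q t) ≤ r + 1 ∧
      geodesicPointDist (q α) (q β) u (q t') ≤ r + 1 := by
  let near (I : Set ℝ) : Set ℝ := {u | ∃ t ∈ I, geodesicPointDist (q α) (q β) u (q t) ≤ r}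
  have cover : Icc 0 (dist (q α) (q β)) ⊆ near (Icc α s) ∪ near (Icc s β) := by
    intro u hu
    obtain ⟨_, ⟨t, ht, rfl⟩, htr⟩ := hr u hu
    exact (le_total t s).imp (fun hts ↦ ⟨t, ⟨ht.1, hts⟩, htr⟩) fun hst ↦ ⟨t, ⟨hst, ht.2⟩, htr⟩
  have zero_mem : 0 ∈ near (Icc α s) :=
    ⟨α, left_mem_Icc.2 hs.1, by simpa [geodesicPointDist, dist_comm] using hr.nonneg⟩
  have dist_mem : dist (q α) (q β) ∈ near (Icc s β) :=
    ⟨β, right_mem_Icc.2 hs.2, by simpa [geodesicPointDist] using hr.nonneg⟩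
  have near_of_closure {I : Set ℝ} {u : ℝ} (hu : u ∈ closure (near I)) :
      ∃ t ∈ I, geodesicPointDist (q α) (q β) u (q t) ≤ r + 1 := by
    obtain ⟨v, ⟨t, ht, hv⟩, huv⟩ := Metric.mem_closure_iff.1 hu 1 one_pos
    rw [Real.dist_eq] at huv
    have hlip := geodesicPointDist_le_add (q α) (q β) (q t) (q t) u v
    rw [dist_self] at hlip
    exact ⟨t, ht, by linarith⟩
  obtain ⟨u, -, hu, hu'⟩ := nonempty_inter_closure_inter_closure_of_isPreconnected
    isPreconnected_Icc cover ⟨0, left_mem_Icc.2 dist_nonneg, zero_mem⟩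
    ⟨_, right_mem_Icc.2 dist_nonneg, dist_mem⟩
  obtain ⟨t, ht, htr⟩ := near_of_closure hu
  obtain ⟨t', ht', htr'⟩ := near_of_closure hu'
  exact ⟨u, t, ht, t', ht', htr, htr'⟩

theorem IsQuasiGeodesicOn.gromovProduct_endpoints_le_of_shadows
    (hq : IsQuasiGeodesicOn D q (Icc α β)) (hD : 0 < D) (hE : IsGromovHyperbolic E δ)
    (hr : ShadowsGeodesic (q '' Icc α β) (q α) (q β) r) {s : ℝ} (hs : s ∈ Icc α β) :
    gromovProduct (dist (q s)) (q α) (q β) ≤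
      r + 1 + (D * (D * (2 * (r + 1) + 2 * δ + D)) + D) := by
  obtain ⟨u, t, ht, t', ht', htr, htr'⟩ := hr.exists_le_exists_ge hs
  have htI : t ∈ Icc α β := ⟨ht.1, ht.2.trans hs.2⟩
  have htI' : t' ∈ Icc α β := ⟨hs.1.trans ht'.1, ht'.2⟩
  have hst : |s - t| ≤ D * (2 * (r + 1) + 2 * δ + D) :=
    calc |s - t| ≤ |t' - t| := by
          gcongr <;> linarith [ht.2, ht'.1]
      _ ≤ D * (dist (q t') (q t) + D) := hq.abs_sub_le hD htI' htI
      _ ≤ D * (2 * (r + 1) + 2 * δ + D) := by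
        gcongr
        linarith [hE.dist_le_geodesicPointDist_add (q α) (q β) (q t') (q t) u]
  calc gromovProduct (dist (q s)) (q α) (q β)
      ≤ geodesicPointDist (q α) (q β) u (q s) := gromovProduct_le_geodesicPointDist _ _ _ _
    _ ≤ geodesicPointDist (q α) (q β) u (q t) + |u - u| + dist (q s) (q t) :=
      geodesicPointDist_le_add ..
    _ ≤ r + 1 + 0 + (D * |s - t| + D) := by
      gcongr
      · simp
      · exact (hq s hs t htI).2
    _ ≤ _ := by rw [add_zero]; gcongr

end Stability

theorem IsGromovHyperbolic.le_gromovProduct_of_gromovProduct_le (hE : IsGromovHyperbolic E δ)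
    {γ w p : E} {K R : ℝ} (ha : K ≤ gromovProduct (dist γ) w a)
    (hb : K ≤ gromovProduct (dist γ) w b) (hab : gromovProduct (dist p) a b ≤ R) :
    K - (R + δ) ≤ gromovProduct (dist γ) w p := by
  have via_a := gromovProduct_dist_le_add γ w a p
  have via_b := gromovProduct_dist_le_add γ w b p
  have hmin : min (gromovProduct (dist p) a w) (gromovProduct (dist p) w b) ≤ R + δ := by
    linarith [hE p a w b]
  rcases min_le_iff.1 hmin with haw | hwb
  · linarith
  · rw [gromovProduct_comm] at hwb
    linarith

theorem gromov_product_along_quasigeodesic_general (δ : ℝ) {D : ℝ} (hD : 0 < D) :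
    ∃ X₀ : ℝ, 0 ≤ X₀ ∧ ∀ (E : Type u) [PseudoMetricSpace E], IsGromovHyperbolic E δ →
      ∀ (γ w : E) (K α β : ℝ) (q : ℝ → E), IsQuasiGeodesicOn D q (Icc α β) →
        K ≤ gromovProduct (dist γ) w (q α) → K ≤ gromovProduct (dist γ) w (q β) →
          ∀ s ∈ Icc α β, K - X₀ ≤ gromovProduct (dist γ) w (q s) := by
  obtain ⟨H, hH⟩ := exists_shadowsGeodesic_of_isQuasiGeodesicOn.{u} δ hD
  let R := H + 1 + (D * (D * (2 * (H + 1) + 2 * δ + D)) + D)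
  refine ⟨max 0 (R + δ), le_max_left _ _, fun E _ hE γ w K α β q hq hα hβ s hs ↦ ?_⟩
  have endpoints := hq.gromovProduct_endpoints_le_of_shadows hD hE (hH hE (hs.1.trans hs.2) hq) hs
  exact (sub_le_sub_left (le_max_right _ _) K).trans
    (hE.le_gromovProduct_of_gromovProduct_le hα hβ endpoints)

/-- Finite-endpoint form of Corollary 2.21 of the paper: for all `δ ≥ 0` and `D ≥ 1`
there is a constant `X₀ ≥ 0`, depending only on `δ` and `D`, such that in any geodesic
metric space satisfying the four-point `δ`-hyperbolicity inequality at every basepoint,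
any point on a `D`-quasi-geodesic `q : [0,T] → E` whose endpoints have Gromov product
(with respect to a basepoint `γ`) at least `K` with a point `w` satisfies
`(w·q(s))_γ ≥ K - X₀`. -/
theorem gromov_product_along_quasigeodesic :
    ∀ δ D : ℝ, 0 ≤ δ → 1 ≤ D → ∃ X₀ : ℝ, 0 ≤ X₀ ∧
      ∀ (E : Type) (_ : MetricSpace E),
        -- (i) any two points are joined by a geodesic
        (∀ u v : E, ∃ f : ℝ → E, f 0 = u ∧ f (dist u v) = v ∧
          ∀ s ∈ Set.Icc (0 : ℝ) (dist u v), ∀ t ∈ Set.Icc (0 : ℝ) (dist u v),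
            dist (f s) (f t) = |s - t|) →
        -- (ii) four-point hyperbolicity inequality at every basepoint
        (∀ p a b c : E,
          (dist p a + dist p c - dist a c) / 2 ≥
            min ((dist p a + dist p b - dist a b) / 2)
                ((dist p b + dist p c - dist b c) / 2) - 2 * δ) →
        ∀ (γ w : E) (K T : ℝ), 0 ≤ T →
          ∀ q : ℝ → E,
            -- q is a D-quasi-geodesic on [0,T]
            (∀ s ∈ Set.Icc (0 : ℝ) T, ∀ t ∈ Set.Icc (0 : ℝ) T,
              D⁻¹ * |s - t| - D ≤ dist (q s) (q t) ∧
                dist (q s) (q t) ≤ D * |s - t| + D) →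
            (dist γ w + dist γ (q 0) - dist w (q 0)) / 2 ≥ K →
            (dist γ w + dist γ (q T) - dist w (q T)) / 2 ≥ K →
            ∀ s ∈ Set.Icc (0 : ℝ) T,
              (dist γ w + dist γ (q s) - dist w (q s)) / 2 ≥ K - X₀ := by
  intro δ D _ hD
  obtain ⟨X₀, hX₀, h⟩ := gromov_product_along_quasigeodesic_general (2 * δ) (one_pos.trans_le hD)
  exact ⟨X₀, hX₀, fun E _ _ hE γ w K T _ ↦ h E hE γ w K 0 T⟩
end

section
/- Let α ∈ ℝ be irrational and B > 0. Let x₁, x₂ ∈ ℝ/ℤ be such that there exists N ∈ ℕ with k·dist(x₁ − kα, x₂) ≥ B for all integers k ≥ N, and x₁ − kα ≠ x₂ in ℝ/ℤ for all integers k ≠ 0 (i.e. the pair (x₁, x₂) is B-badly approximable for the rotation z ↦ z − α, which is the first-return map of the vertical flow on T_α to the horizontal circle {[(x,0)]}). Let p = [(x̃₁, 0)] and q = [(x̃₂, 0)] in T_α, where x̃ᵢ ∈ ℝ are lifts of xᵢ. Then for every B' with 0 < B' < B: there exists N' > 0 such that t·dist(F^t p, q) ≥ B' for all t ≥ N', and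 F^t p ≠ q for all t ≠ 0. -/
/-- The lattice `Λ_α ⊆ ℝ²` generated by `(1,0)` and `(α,1)`. -/
def torusLattice (α : ℝ) : AddSubgroup (ℝ × ℝ) :=
  AddSubgroup.closure {((1 : ℝ), (0 : ℝ)), (α, (1 : ℝ))}

/-- The flat torus `T_α = ℝ²/Λ_α`. -/
abbrev FlatTorus (α : ℝ) := (ℝ × ℝ) ⧸ torusLattice α

/-- The Euclidean norm on `ℝ²`. -/
noncomputable def eucNorm (v : ℝ × ℝ) : ℝ := Real.sqrt (v.1 ^ 2 + v.2 ^ 2)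

/-- The quotient metric on `T_α`: `dist([u],[v]) = inf {‖u - v - λ‖ : λ ∈ Λ_α}`. -/
noncomputable def torusDist (α : ℝ) (x y : FlatTorus α) : ℝ :=
  sInf (eucNorm '' {w : ℝ × ℝ | (QuotientAddGroup.mk w : FlatTorus α) = x - y})

/-- The vertical straight-line flow on `T_α`: `F^t [v] = [v + (0,t)]`. -/
def vertFlow (α : ℝ) (t : ℝ) (x : FlatTorus α) : FlatTorus α :=
  x + QuotientAddGroup.mk ((0 : ℝ), t)

/-!
The vectors representing `F^t p - q` have second coordinate `t - k`, for `k : ℤ`, and first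
coordinate projecting to `x₁ - kα - x₂` in `ℝ/ℤ`. Hence the distance from `F^t p` to `q` is at least
`min_k max (dist (x₁ - kα, x₂), |t - k|)`. If this were below `B'/t` for a large `t`, the minimizing
`k` would lie within `1` of `t` and satisfy `k · dist (x₁ - kα, x₂) < B' (t + 1)/t ≤ B`, against the
hypothesis on the rotation.
-/

open Filter

theorem mem_torusLattice_iff {α : ℝ} {v : ℝ × ℝ} :
    v ∈ torusLattice α ↔
      ∃ k : ℤ, v.2 = k ∧ (v.1 : UnitAddCircle) = k • (α : UnitAddCircle) := by
  rw [torusLattice, AddSubgroup.mem_closure_pair]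
  constructor
  · rintro ⟨m, k, rfl⟩
    refine ⟨k, by simp, ?_⟩
    rw [← AddCircle.coe_zsmul, ← sub_eq_zero, ← AddCircle.coe_sub, AddCircle.coe_eq_zero_iff]
    exact ⟨m, by simp⟩
  · rintro ⟨k, hsnd, hfst⟩
    rw [← AddCircle.coe_zsmul, ← sub_eq_zero, ← AddCircle.coe_sub,
      AddCircle.coe_eq_zero_iff] at hfst
    obtain ⟨m, hm⟩ := hfst
    exact ⟨m, k, Prod.ext (by simp [hm]) (by simp [hsnd])⟩

theorem torusMk_eq_torusMk_iff {α : ℝ} {v u : ℝ × ℝ} :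
    (QuotientAddGroup.mk v : FlatTorus α) = QuotientAddGroup.mk u ↔
      ∃ k : ℤ, v.2 - u.2 = k ∧ (v.1 : UnitAddCircle) - k • (α : UnitAddCircle) = u.1 := by
  rw [eq_comm, QuotientAddGroup.eq, neg_add_eq_sub, mem_torusLattice_iff]
  simp only [Prod.snd_sub, Prod.fst_sub, AddCircle.coe_sub, sub_eq_iff_eq_add, add_comm]

theorem norm_le_eucNorm (v : ℝ × ℝ) : ‖v‖ ≤ eucNorm v :=
  max_le (Real.abs_le_sqrt (le_add_of_nonneg_right (sq_nonneg v.2)))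
    (Real.abs_le_sqrt (le_add_of_nonneg_left (sq_nonneg v.1)))

theorem le_torusDist_of_forall_le_max {α r : ℝ} {v u : ℝ × ℝ}
    (h : ∀ k : ℤ, r ≤ max (dist ((v.1 : UnitAddCircle) - k • (α : UnitAddCircle)) u.1)
      |v.2 - u.2 - k|) :
    r ≤ torusDist α (QuotientAddGroup.mk v) (QuotientAddGroup.mk u) := by
  refine le_csInf (Set.Nonempty.image _ ⟨v - u, rfl⟩) ?_
  rintro _ ⟨w, hw, rfl⟩
  obtain ⟨k, hsnd, hfst⟩ := torusMk_eq_torusMk_iff.1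
    (show (QuotientAddGroup.mk (v - u) : FlatTorus α) = QuotientAddGroup.mk w from hw.symm)
  have hdist : dist ((v.1 : UnitAddCircle) - k • (α : UnitAddCircle)) u.1 =
      ‖(w.1 : UnitAddCircle)‖ := by
    rw [dist_eq_norm, ← hfst, Prod.fst_sub, AddCircle.coe_sub, sub_right_comm]
  have habs : v.2 - u.2 - k = w.2 := by rw [← hsnd, Prod.snd_sub, sub_sub_cancel]
  calc r ≤ max ‖(w.1 : UnitAddCircle)‖ |w.2| := by simpa only [hdist, habs] using h k
    _ ≤ ‖w‖ := max_le_max_right _ QuotientAddGroup.norm_mk_le_norm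
    _ ≤ eucNorm w := norm_le_eucNorm w

theorem eventually_forall_le_mul_max {B B' : ℝ} (hB'B : B' < B) {d : ℤ → ℝ}
    (hd : ∀ᶠ k : ℤ in atTop, B ≤ k * d k) :
    ∀ᶠ t : ℝ in atTop, ∀ k : ℤ, B' ≤ t * max (d k) |t - k| := by
  obtain ⟨N, hN, hd⟩ := (atTop_basis_Ioi' 0).eventually_iff.1 hd
  have hN0 : (0 : ℝ) < N := Int.cast_pos.2 hN
  filter_upwards [eventually_ge_atTop (N + 1 : ℝ), eventually_ge_atTop B',
    eventually_ge_atTop (B' / (B - B'))] with t htN htB' ht k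
  by_contra! hlt
  have ht0 : 0 < t := by linarith
  have hdk : t * d k < B' := (mul_le_mul_of_nonneg_left (le_max_left _ _) ht0.le).trans_lt hlt
  have htk : t * |t - k| < B' := (mul_le_mul_of_nonneg_left (le_max_right _ _) ht0.le).trans_lt hlt
  have hB' : 0 < B' := (by positivity : 0 ≤ t * |t - k|).trans_lt htk
  obtain ⟨hk_gt, hk_lt⟩ : -1 < t - k ∧ t - k < 1 :=
    abs_lt.1 (lt_of_mul_lt_mul_left (by rw [mul_one]; exact htk.trans_le htB') ht0.le)
  have hNk : (N : ℝ) < k := by linarith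
  have hk0 : (0 : ℝ) < k := hN0.trans hNk
  have hBk : B ≤ k * d k := hd (Int.cast_lt.1 hNk)
  have hgap : (t + 1) * B' ≤ t * B := by
    linarith [(div_le_iff₀ (sub_pos.2 hB'B)).1 ht]
  have : t * B < t * B :=
    calc t * B ≤ t * (k * d k) := by gcongr
      _ = k * (t * d k) := by ring
      _ < k * B' := by gcongr
      _ ≤ (t + 1) * B' := by gcongr; linarith
      _ ≤ t * B := hgap
  exact this.false

theorem vertFlow_mk (α t : ℝ) (v : ℝ × ℝ) :
    vertFlow α t (QuotientAddGroup.mk v) = QuotientAddGroup.mk (v.1, v.2 + t) := by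
  rw [vertFlow, ← QuotientAddGroup.mk_add, Prod.add_def, add_zero]

theorem vertFlow_horizontal_eq_iff {α t y₁ y₂ : ℝ} :
    vertFlow α t (QuotientAddGroup.mk (y₁, 0)) = QuotientAddGroup.mk (y₂, 0) ↔
      ∃ k : ℤ, t = k ∧ (y₁ : UnitAddCircle) - k • (α : UnitAddCircle) = y₂ := by
  simp only [vertFlow_mk, torusMk_eq_torusMk_iff, zero_add, sub_zero]

theorem eventually_le_mul_torusDist_vertFlow {α B B' y₁ y₂ : ℝ} (hB'B : B' < B)
    (happrox : ∀ᶠ k : ℤ in atTop,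
      B ≤ k * dist ((y₁ : UnitAddCircle) - k • (α : UnitAddCircle)) y₂) :
    ∀ᶠ t : ℝ in atTop, B' ≤ t * torusDist α
      (vertFlow α t (QuotientAddGroup.mk (y₁, 0))) (QuotientAddGroup.mk (y₂, 0)) := by
  filter_upwards [eventually_forall_le_mul_max hB'B happrox, eventually_gt_atTop 0] with t ht ht0
  rw [← div_le_iff₀' ht0, vertFlow_mk]
  refine le_torusDist_of_forall_le_max fun k => ?_
  simpa only [zero_add, sub_zero, div_le_iff₀' ht0] using ht k

theorem badly_approximable_from_transversal_general {α B B' y₁ y₂ : ℝ}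
    (happrox : ∃ N : ℕ, ∀ k : ℤ, (N : ℤ) ≤ k →
      B ≤ k * dist ((y₁ : UnitAddCircle) - k • (α : UnitAddCircle)) y₂)
    (hne : ∀ k : ℤ, k ≠ 0 → (y₁ : UnitAddCircle) - k • (α : UnitAddCircle) ≠ y₂)
    (hB'B : B' < B) :
    (∃ N' : ℝ, 0 < N' ∧ ∀ t : ℝ, N' ≤ t → B' ≤ t * torusDist α
      (vertFlow α t (QuotientAddGroup.mk (y₁, 0))) (QuotientAddGroup.mk (y₂, 0))) ∧
    ∀ t : ℝ, t ≠ 0 →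
      vertFlow α t (QuotientAddGroup.mk (y₁, 0)) ≠ QuotientAddGroup.mk (y₂, 0) := by
  constructor
  · obtain ⟨N, hN⟩ := happrox
    obtain ⟨N', hN'⟩ := ((eventually_gt_atTop 0).and
      (eventually_le_mul_torusDist_vertFlow hB'B
        (eventually_atTop.2 ⟨N, hN⟩))).exists_forall_of_atTop
    exact ⟨N', (hN' N' le_rfl).1, fun t ht => (hN' t ht).2⟩
  · intro t ht hreturn
    obtain ⟨k, rfl, hk⟩ := vertFlow_horizontal_eq_iff.1 hreturn
    exact hne k (Int.cast_ne_zero.1 ht) hk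

/-- Sublemma in the proof of Proposition 3.12 of the paper, specialized to `T_α` with
the horizontal circle as transversal: if the pair `(x₁, x₂)` on the circle `ℝ/ℤ` is
`B`-badly approximable for the rotation `z ↦ z - α` (the first-return map of the
vertical flow), then the corresponding points `p = [(x̃₁, 0)]`, `q = [(x̃₂, 0)]` of
`T_α` are `B'`-badly approximable for the vertical flow, for every `0 < B' < B`. -/
theorem badly_approximable_from_transversal (α : ℝ) (hα : Irrational α)
    (B : ℝ) (hB : 0 < B) (x₁ x₂ : AddCircle (1 : ℝ))
    (happrox : ∃ N : ℕ, ∀ k : ℤ, (N : ℤ) ≤ k →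
      B ≤ (k : ℝ) * dist (x₁ - k • ((α : ℝ) : AddCircle (1 : ℝ))) x₂)
    (hne : ∀ k : ℤ, k ≠ 0 → x₁ - k • ((α : ℝ) : AddCircle (1 : ℝ)) ≠ x₂)
    (y₁ y₂ : ℝ)
    (hy₁ : ((y₁ : ℝ) : AddCircle (1 : ℝ)) = x₁)
    (hy₂ : ((y₂ : ℝ) : AddCircle (1 : ℝ)) = x₂)
    (p q : FlatTorus α)
    (hp : p = QuotientAddGroup.mk (y₁, (0 : ℝ)))
    (hq : q = QuotientAddGroup.mk (y₂, (0 : ℝ)))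
    (B' : ℝ) (hB'0 : 0 < B') (hB'B : B' < B) :
    (∃ N' : ℝ, 0 < N' ∧
      ∀ t : ℝ, N' ≤ t → B' ≤ t * torusDist α (vertFlow α t p) q) ∧
    (∀ t : ℝ, t ≠ 0 → vertFlow α t p ≠ q) := by
  subst hy₁ hy₂ hp hq
  exact badly_approximable_from_transversal_general happrox hne hB'B
end

section
/- Let α ∈ ℝ and B > 0, and let q, q' ∈ T_α be points such that F^t q ≠ q' for all t ∈ ℝ, and such that there exists N > 0 with t·dist(F^t q, q') ≥ B for all t ≥ N. Then for all s, s' ∈ ℝ and every B' with 0 < B' < B, the translated points p = F^s q and p' = F^{s'} q' satisfy: F^t p ≠ p' for all t ∈ ℝ, and there exists N' > 0 such that t·dist(F^t p, p') ≥ B' for all t ≥ N'. -/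
/-!
The flow acts by translations, which are isometries, so comparing `F^t F^s q` with `F^{s'} q'` is
the same as comparing `F^{t + c} q` with `q'`, where `c = s - s'`. Replacing the time `t + c` by `t`
in the product of time and distance costs a factor `t / (t + c)`, which tends to `1` and is
eventually absorbed by the gap between `B'` and `B`.
-/

open Filter Topology

section Asymptotics

variable {𝕜 : Type*} [Field 𝕜] [LinearOrder 𝕜] [IsStrictOrderedRing 𝕜] [TopologicalSpace 𝕜]
  [OrderTopology 𝕜]

theorem tendsto_div_add_const_atTop_nhds_one (c : 𝕜) :
    Tendsto (fun t : 𝕜 ↦ t / (t + c)) atTop (𝓝 1) := by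
  have shift : Tendsto (fun t : 𝕜 ↦ t + c) atTop atTop :=
    tendsto_atTop_add_const_right _ c tendsto_id
  have limit : Tendsto (fun t : 𝕜 ↦ 1 - c / (t + c)) atTop (𝓝 1) := by
    simpa only [sub_zero] using (shift.const_div_atTop c).const_sub 1
  refine limit.congr' ?_
  filter_upwards [shift.eventually_gt_atTop 0] with t ht
  rw [one_sub_div ht.ne', add_sub_cancel_right]

theorem eventually_le_mul_comp_add_const {f : 𝕜 → 𝕜} {B B' : 𝕜}
    (hf : ∀ᶠ t in atTop, B ≤ t * f t) (hB : B' < B) (c : 𝕜) :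
    ∀ᶠ t in atTop, B' ≤ t * f (t + c) := by
  have shift : Tendsto (fun t : 𝕜 ↦ t + c) atTop atTop :=
    tendsto_atTop_add_const_right _ c tendsto_id
  have limit : Tendsto (fun t : 𝕜 ↦ t / (t + c) * B) atTop (𝓝 B) := by
    simpa only [one_mul] using (tendsto_div_add_const_atTop_nhds_one c).mul_const B
  filter_upwards [limit.eventually_const_lt hB, shift.eventually hf, eventually_ge_atTop 0,
    shift.eventually_gt_atTop 0] with t hB' hft ht htc
  calc
    B' ≤ t / (t + c) * B := hB'.le
    _ ≤ t / (t + c) * ((t + c) * f (t + c)) := by gcongr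
    _ = t * f (t + c) := by field_simp

end Asymptotics

theorem eventually_atTop_iff_exists_gt {ι : Type*} [Preorder ι] [IsDirectedOrder ι] [NoMaxOrder ι]
    (a : ι) {p : ι → Prop} : (∀ᶠ t in atTop, p t) ↔ ∃ N, a < N ∧ ∀ t, N ≤ t → p t := by
  have : Nonempty ι := ⟨a⟩
  constructor
  · intro hp
    exact ((eventually_gt_atTop a).and (eventually_forall_ge_atTop.2 hp)).exists
  · rintro ⟨N, -, hN⟩
    exact (eventually_ge_atTop N).mono hN

section VerticalFlow

variable {α : ℝ}

theorem vertFlow_vertFlow (s t : ℝ) (x : FlatTorus α) :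
    vertFlow α t (vertFlow α s x) = vertFlow α (s + t) x := by
  simp only [vertFlow, add_assoc, ← QuotientAddGroup.mk_add, Prod.mk_add_mk, add_zero]

theorem vertFlow_injective (t : ℝ) : Function.Injective (vertFlow α t) :=
  add_left_injective _

theorem torusDist_vertFlow_vertFlow (t : ℝ) (x y : FlatTorus α) :
    torusDist α (vertFlow α t x) (vertFlow α t y) = torusDist α x y := by
  simp only [torusDist, vertFlow, add_sub_add_right_eq_sub]

end VerticalFlow

/-- Diophantine core of Proposition 3.14 of the paper (sliding points): if `(q, q')`
is a `B`-badly approximable pair for the vertical flow on `T_α` with `q'` never on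
the flow orbit of `q`, then for all `s, s' ∈ ℝ` and every `0 < B' < B` the translated
points `F^s q` and `F^{s'} q'` form a `B'`-badly approximable pair. -/
theorem sliding_points_badly_approximable (α B : ℝ) (hB : 0 < B)
    (q q' : FlatTorus α)
    (hne : ∀ t : ℝ, vertFlow α t q ≠ q')
    (happrox : ∃ N : ℝ, 0 < N ∧
      ∀ t : ℝ, N ≤ t → B ≤ t * torusDist α (vertFlow α t q) q')
    (s s' B' : ℝ) (hB'0 : 0 < B') (hB'B : B' < B) :
    (∀ t : ℝ, vertFlow α t (vertFlow α s q) ≠ vertFlow α s' q') ∧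
    (∃ N' : ℝ, 0 < N' ∧
      ∀ t : ℝ, N' ≤ t →
        B' ≤ t * torusDist α (vertFlow α t (vertFlow α s q)) (vertFlow α s' q')) := by
  have slide (t : ℝ) :
      vertFlow α t (vertFlow α s q) = vertFlow α s' (vertFlow α (t + (s - s')) q) := by
    rw [vertFlow_vertFlow, vertFlow_vertFlow]
    congr 1
    ring
  simp only [slide, (vertFlow_injective s').ne_iff, torusDist_vertFlow_vertFlow]
  rw [← eventually_atTop_iff_exists_gt] at happrox ⊢
  exact ⟨fun t ↦ hne _, eventually_le_mul_comp_add_const happrox hB'B _⟩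
end

section
/- Let θ ∈ ℝ, let r ≥ 1, and let p₁, …, p_r ∈ ℝ/ℤ. Then the set of q ∈ ℝ/ℤ such that for every i ∈ {1, …, r} the pair (p_i, q) is (1/64)^{3r}-badly approximable for the rotation R_θ is dense in ℝ/ℤ. -/
/-- A pair `(x, y)` of points of the circle `ℝ/ℤ` is `B`-badly approximable for the
rotation `R_θ : z ↦ z + θ` if there is `N ∈ ℕ` such that `k · dist(x + kθ, y) ≥ B`
for all integers `k ≥ N`, and `x + kθ ≠ y` for all integers `k ≠ 0`. -/
def BadlyApproximablePair (B θ : ℝ) (x y : AddCircle (1 : ℝ)) : Prop :=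
  (∃ N : ℕ, ∀ k : ℤ, (N : ℤ) ≤ k →
    B ≤ (k : ℝ) * dist (x + k • ((θ : ℝ) : AddCircle (1 : ℝ))) y) ∧
  (∀ k : ℤ, k ≠ 0 → x + k • ((θ : ℝ) : AddCircle (1 : ℝ)) ≠ y)

/-!
If `θ` is rational then all orbits are finite and any `q` outside them works, so suppose that `θ`
is irrational. Let `N` be at least `16` and at least `16` times the number of orbits. We build
nested arcs of radius `1 / (8 * N * S)`, where `S` runs through closest-return times of the
rotation by `θ`, that is, denominators of convergents.

Given such an arc, let `q ≤ N * S < T` be consecutive closest-return times; then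
`‖q • θ‖ ≤ 1 / T`. Two points with times at most `T / N ^ 2` of one orbit that both come near the
arc have times differing by a multiple of `q`, so their distance is at most the accumulated drift
`1 / (N ^ 2 * S)`: each orbit contributes a single small cluster. The remaining points with times
less than `T` are `1 / (2 * T)`-separated within each orbit, so there are few of them near the arc,
and a point of time more than `T / N ^ 2` only has to be avoided by `1 / (N ^ 2 * T)`. Comparing
lengths, there is room in the arc for one of radius `1 / (8 * N * T)` that is far enough from all
these points. The common point of the nested arcs satisfies the bound with constant `1 / N ^ 4`.
-/

open Metric MeasureTheory

section Circle

variable {ℓ : ℝ} [Fact (0 < ℓ)] {ι : Type*}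

lemma norm_nsmul_eq_of_mul_norm_le_half {x : AddCircle ℓ} {n : ℕ} (h : n * ‖x‖ ≤ ℓ / 2) :
    ‖n • x‖ = n * ‖x‖ := by
  have hℓ : 0 < ℓ := Fact.out
  obtain ⟨u, rfl, hu⟩ : ∃ u : ℝ, (u : AddCircle ℓ) = x ∧ ‖x‖ = |u| := by
    obtain ⟨v, rfl⟩ := QuotientAddGroup.mk_surjective x
    refine ⟨v - round (ℓ⁻¹ * v) * ℓ, ?_, AddCircle.norm_eq ℓ⟩
    rw [← zsmul_eq_mul, AddCircle.coe_sub, AddCircle.coe_zsmul, AddCircle.coe_period, smul_zero,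
      sub_zero]
  have hnu : |n • u| = n * |u| := by rw [nsmul_eq_mul, abs_mul, Nat.abs_cast]
  rw [hu] at h ⊢
  rw [← AddCircle.coe_nsmul, ← hnu, AddCircle.norm_coe_eq_abs_iff ℓ hℓ.ne', hnu, abs_of_pos hℓ]
  exact h

lemma exists_mem_closedBall_forall_lt_dist (s : Finset ι) (c : ι → AddCircle ℓ) {ρ : ι → ℝ}
    (hρ : ∀ i ∈ s, 0 ≤ ρ i) (x : AddCircle ℓ) {R : ℝ} (hR : 2 * R ≤ ℓ)
    (hsum : ∑ i ∈ s, ρ i < R) :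
    ∃ y ∈ closedBall x R, ∀ i ∈ s, ρ i < dist y (c i) := by
  by_contra! hcover
  have hsub : closedBall x R ⊆ ⋃ i ∈ s, closedBall (c i) (ρ i) := fun y hy ↦ by
    simpa only [Set.mem_iUnion, mem_closedBall, exists_prop] using hcover y hy
  have hvol : ENNReal.ofReal (2 * R) ≤ ENNReal.ofReal (2 * ∑ i ∈ s, ρ i) := calc
    ENNReal.ofReal (2 * R) = volume (closedBall x R) := by
      rw [AddCircle.volume_closedBall, min_eq_right hR]
    _ ≤ ∑ i ∈ s, volume (closedBall (c i) (ρ i)) :=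
      (measure_mono hsub).trans (measure_biUnion_finset_le s _)
    _ ≤ ∑ i ∈ s, ENNReal.ofReal (2 * ρ i) := by
      simp only [AddCircle.volume_closedBall]
      gcongr
      exact min_le_right _ _
    _ = ENNReal.ofReal (2 * ∑ i ∈ s, ρ i) := by
      rw [Finset.mul_sum, ENNReal.ofReal_sum_of_nonneg fun i hi ↦ by linarith [hρ i hi]]
  rw [ENNReal.ofReal_le_ofReal_iff (by linarith [Finset.sum_nonneg hρ])] at hvol
  linarith

lemma card_mul_le_of_pairwise_le_dist {s : Finset ι} {f : ι → AddCircle ℓ} {x : AddCircle ℓ}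
    {δ R : ℝ} (hδ : 2 * δ ≤ ℓ) (hR : 0 ≤ R + δ)
    (hsep : (s : Set ι).Pairwise fun i j ↦ 2 * δ ≤ dist (f i) (f j))
    (hs : ∀ i ∈ s, dist (f i) x ≤ R) :
    s.card * δ ≤ R + δ := by
  have hdisj : (s : Set ι).PairwiseDisjoint fun i ↦ ball (f i) δ := fun i hi j hj hij ↦
    ball_disjoint_ball (by linarith [hsep hi hj hij])
  have hsub : ⋃ i ∈ s, ball (f i) δ ⊆ closedBall x (R + δ) :=
    Set.iUnion₂_subset fun i hi ↦ ball_subset_closedBall.trans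
      (closedBall_subset_closedBall' (by linarith [hs i hi]))
  have hvol : ENNReal.ofReal (s.card * (2 * δ)) ≤ ENNReal.ofReal (2 * (R + δ)) := calc
    ENNReal.ofReal (s.card * (2 * δ)) = ∑ i ∈ s, volume (ball (f i) δ) := by
      simp only [← measure_congr AddCircle.closedBall_ae_eq_ball, AddCircle.volume_closedBall,
        min_eq_right hδ, Finset.sum_const]
      rw [← nsmul_eq_mul, ENNReal.ofReal_nsmul]
    _ = volume (⋃ i ∈ s, ball (f i) δ) :=
      (measure_biUnion_finset hdisj fun _ _ ↦ measurableSet_ball).symm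
    _ ≤ volume (closedBall x (R + δ)) := measure_mono hsub
    _ ≤ ENNReal.ofReal (2 * (R + δ)) := by
      rw [AddCircle.volume_closedBall]
      exact ENNReal.ofReal_le_ofReal (min_le_right _ _)
  rw [ENNReal.ofReal_le_ofReal_iff (by linarith)] at hvol
  linarith

lemma dense_compl_of_countable {Z : Set (AddCircle ℓ)} (hZ : Z.Countable) : Dense Zᶜ := by
  have hnull : NullSingletonClass (volume : Measure (AddCircle ℓ)) := ⟨fun x ↦ by
    rw [← closedBall_zero, AddCircle.volume_closedBall, mul_zero,
      min_eq_right (Fact.out : 0 < ℓ).le, ENNReal.ofReal_zero]⟩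
  exact Measure.dense_of_ae (hZ.ae_notMem volume)

end Circle

/-- `q` is a closest-return time of the rotation by `α`: its `q`-th iterate moves points strictly
less than all earlier positive iterates do. For an irrational rotation of the circle these are the
denominators of the convergents of `α`, which set the scales at which the orbit is controlled. -/
def IsClosestReturn {G : Type*} [SeminormedAddCommGroup G] (α : G) (q : ℕ) : Prop :=
  0 < q ∧ ∀ k, 0 < k → k < q → ‖q • α‖ < ‖k • α‖

lemma IsClosestReturn.one {G : Type*} [SeminormedAddCommGroup G] (α : G) :
    IsClosestReturn α 1 :=
  ⟨one_pos, fun k hk hk1 ↦ by omega⟩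

lemma dist_nsmul_nsmul_of_le {G : Type*} [SeminormedAddCommGroup G] (α : G) {k l : ℕ}
    (h : k ≤ l) : dist (k • α) (l • α) = ‖(l - k) • α‖ := by
  rw [dist_comm, dist_eq_norm, sub_nsmul α h, sub_eq_add_neg]

namespace IsClosestReturn

variable {α : UnitAddCircle} {q T k l : ℕ}

lemma exists_next (hα : ¬ IsOfFinAddOrder α) (hq : IsClosestReturn α q) :
    ∃ T, IsClosestReturn α T ∧ q < T ∧ ‖q • α‖ ≤ 1 / T := by
  classical
  have hcloser : ∃ T, 0 < T ∧ ‖T • α‖ < ‖q • α‖ := by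
    have hpos : 0 < ‖q • α‖ := norm_pos_iff.2 fun h ↦
      hα (isOfFinAddOrder_iff_nsmul_eq_zero.2 ⟨q, hq.1, h⟩)
    obtain ⟨n, hn⟩ := exists_nat_one_div_lt hpos
    obtain ⟨k, hk, hk'⟩ := AddCircle.exists_norm_nsmul_le (T := 1) α n.succ_pos
    refine ⟨k, hk.1, hk'.trans_lt (lt_of_le_of_lt ?_ hn)⟩
    gcongr
    push_cast
    linarith
  obtain ⟨hT, hTq⟩ := Nat.find_spec hcloser
  set T := Nat.find hcloser
  have hbefore : ∀ k, 0 < k → k < T → ‖q • α‖ ≤ ‖k • α‖ := fun k hk hkT ↦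
    not_lt.1 fun hlt ↦ Nat.find_min hcloser hkT ⟨hk, hlt⟩
  have hqT : q < T := by
    by_contra! hle
    rcases hle.eq_or_lt with heq | hlt
    · exact hTq.ne (by rw [heq])
    · exact hTq.not_gt (hq.2 T hT hlt)
  refine ⟨T, ⟨hT, fun k hk hkT ↦ hTq.trans_le (hbefore k hk hkT)⟩, hqT, ?_⟩
  have hT1 : 0 < T - 1 := by have := hq.1; omega
  obtain ⟨k, hk, hk'⟩ := AddCircle.exists_norm_nsmul_le (T := 1) α hT1
  rw [Nat.sub_add_cancel hT] at hk'
  exact (hbefore k hk.1 (by have := hk.2; omega)).trans hk'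

lemma exists_le_lt {S M : ℕ} (hα : ¬ IsOfFinAddOrder α) (hS : IsClosestReturn α S)
    (hSM : S ≤ M) :
    ∃ q T, IsClosestReturn α q ∧ IsClosestReturn α T ∧ S ≤ q ∧ q ≤ M ∧ M < T ∧
      ‖q • α‖ ≤ 1 / T := by
  classical
  have hq : IsClosestReturn α (Nat.findGreatest (IsClosestReturn α) M) :=
    Nat.findGreatest_spec hSM hS
  obtain ⟨T, hT, hqT, hle⟩ := hq.exists_next hα
  exact ⟨_, T, hq, hT, Nat.le_findGreatest hSM hS, Nat.findGreatest_le M,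
    not_le.1 fun hTM ↦ Nat.findGreatest_is_greatest hqT hTM hT, hle⟩

-- Otherwise `q * ‖k • α‖ = ‖(q * k) • α‖ ≤ k * ‖q • α‖`, although `k < q` and `‖q • α‖ < ‖k • α‖`.
lemma one_div_two_mul_le_norm (hq : IsClosestReturn α q) (hk : 0 < k) (hkq : k < q) :
    1 / (2 * q) ≤ ‖k • α‖ := by
  have hq0 : (0 : ℝ) < q := mod_cast hq.1
  have hk0 : (0 : ℝ) < k := mod_cast hk
  have hkq' : (k : ℝ) < q := mod_cast hkq
  by_contra! hlt
  rw [lt_div_iff₀ (by positivity)] at hlt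
  have hcontra : q * ‖k • α‖ < q * ‖k • α‖ := calc
    q * ‖k • α‖ = ‖q • k • α‖ := (norm_nsmul_eq_of_mul_norm_le_half (by linarith)).symm
    _ = ‖k • q • α‖ := by rw [smul_comm]
    _ ≤ k * ‖q • α‖ := norm_nsmul_le
    _ < k * ‖k • α‖ := mul_lt_mul_of_pos_left (hq.2 k hk hkq) hk0
    _ ≤ q * ‖k • α‖ := by gcongr
  exact hcontra.false

lemma one_div_two_mul_le_dist (hq : IsClosestReturn α q) (hk : k < q) (hl : l < q) (hkl : k ≠ l) :
    1 / (2 * q) ≤ dist (k • α) (l • α) := by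
  wlog h : k < l generalizing k l
  · rw [dist_comm]
    exact this hl hk hkl.symm (by omega)
  rw [dist_nsmul_nsmul_of_le α h.le]
  exact hq.one_div_two_mul_le_norm (by omega) (by omega)

lemma norm_nsmul_le_div_mul (hq : IsClosestReturn α q)
    (h : ‖k • α‖ + k / q * ‖q • α‖ < 1 / (2 * q)) : ‖k • α‖ ≤ k / q * ‖q • α‖ := by
  have hquot : ‖(k / q) • q • α‖ ≤ k / q * ‖q • α‖ := calc
    ‖(k / q) • q • α‖ ≤ (k / q : ℕ) * ‖q • α‖ := norm_nsmul_le
    _ ≤ k / q * ‖q • α‖ := by gcongr; exact Nat.cast_div_le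
  have hsplit : k • α = (k % q) • α + (k / q) • q • α := by
    rw [smul_smul, ← add_smul, mul_comm, Nat.mod_add_div]
  have hmod : k % q = 0 := by
    by_contra hne
    have hfar := hq.one_div_two_mul_le_norm (Nat.pos_of_ne_zero hne) (Nat.mod_lt k hq.1)
    rw [eq_sub_of_add_eq hsplit.symm] at hfar
    linarith [norm_sub_le (k • α) ((k / q) • q • α)]
  rw [hmod, zero_smul, zero_add] at hsplit
  exact hsplit ▸ hquot

end IsClosestReturn

section Stage

variable {α : UnitAddCircle} {ι : Type*} [Fintype ι] {N S q T : ℕ}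

lemma early_radii_add_late_radii_lt {N S T a b : ℝ} (hN : 16 ≤ N) (hS : 0 < S) (hNST : N * S ≤ T)
    (ha : 16 * a ≤ N) (hb : 6 * S * b ≤ T) :
    a * (1 / (N ^ 2 * S) + 1 / (N ^ 4 * S) + 1 / (8 * N * T)) +
      b * (1 / (N ^ 2 * T) + 1 / (8 * N * T)) < 1 / (8 * N * S) - 1 / (8 * N * T) := by
  have hT0 : 0 < T := hNST.trans_lt' (by positivity)
  have ha' : a ≤ N / 16 := by linarith
  have hb' : b ≤ T / (6 * S) := by rw [le_div_iff₀ (by positivity)]; linarith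
  set u := 1 / (N * S) with hu
  have hTu : 1 / T ≤ u := one_div_le_one_div_of_le (by positivity) hNST
  have hu0 : 0 < u := by positivity
  have hNinv : 1 / N ≤ 1 / 16 := one_div_le_one_div_of_le (by norm_num) hN
  have hNsq : (1 / N) ^ 2 ≤ 1 / 16 * (1 / 16) := by rw [sq]; gcongr
  have hNT : 1 / N * (1 / T) ≤ 1 / 16 * u := by gcongr
  calc
    _ ≤ N / 16 * (1 / (N ^ 2 * S) + 1 / (N ^ 4 * S) + 1 / (8 * N * T)) +
        T / (6 * S) * (1 / (N ^ 2 * T) + 1 / (8 * N * T)) := by gcongr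
    _ = u * (1 / 16 + 1 / 16 * (1 / N) ^ 2 + 1 / 6 * (1 / N) + 1 / 48) + 1 / 128 * (1 / T) := by
      rw [hu]; field_simp; ring
    _ ≤ u * (1 / 16 + 1 / 16 * (1 / 16 * (1 / 16)) + 1 / 6 * (1 / 16) + 1 / 48) +
        1 / 128 * u := by gcongr
    _ < 1 / 8 * u - 1 / 8 * (1 / 16 * u) := by linarith
    _ ≤ 1 / 8 * u - 1 / 8 * (1 / N * (1 / T)) := by gcongr
    _ = 1 / (8 * N * S) - 1 / (8 * N * T) := by rw [hu]; field_simp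

lemma IsClosestReturn.dist_early_le (hN : 16 ≤ N) (hS : 0 < S) (hq : IsClosestReturn α q)
    (hSq : S ≤ q) (hqN : q ≤ N * S) (hqT : ‖q • α‖ ≤ 1 / T) {k l : ℕ} (hk : N ^ 2 * k ≤ T)
    (hl : N ^ 2 * l ≤ T) (hkl : dist (k • α) (l • α) ≤ 1 / (3 * N * S)) :
    dist (k • α) (l • α) ≤ 1 / (N ^ 2 * S) := by
  wlog h : k ≤ l generalizing k l
  · rw [dist_comm] at hkl ⊢
    exact this hl hk hkl (by omega)
  rw [dist_nsmul_nsmul_of_le α h] at hkl ⊢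
  have hN' : (16 : ℝ) ≤ N := mod_cast hN
  have hq0 : (0 : ℝ) < q := mod_cast hq.1
  have hl' : (N ^ 2 * (l - k : ℕ) : ℝ) ≤ T := mod_cast (by gcongr; omega : _ ≤ _).trans hl
  have hdrift : ((l - k : ℕ) / q : ℝ) * ‖q • α‖ ≤ 1 / (N ^ 2 * q) := calc
    _ = N ^ 2 * (l - k : ℕ) * ‖q • α‖ / (N ^ 2 * q) := by field_simp
    _ ≤ T * (1 / T) / (N ^ 2 * q) := by gcongr
    _ ≤ 1 / (N ^ 2 * q) := by
      gcongr
      rw [mul_one_div]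
      exact div_self_le_one _
  have hwindow : (1 : ℝ) / (3 * N * S) ≤ 1 / (3 * q) := by
    have : (q : ℝ) ≤ N * S := mod_cast hqN
    rw [mul_assoc]
    gcongr
  have hsmall : (1 : ℝ) / (N ^ 2 * q) < 1 / (6 * q) := by
    gcongr
    nlinarith
  have hthirds : (1 : ℝ) / (3 * q) + 1 / (6 * q) = 1 / (2 * q) := by field_simp; norm_num
  refine (hq.norm_nsmul_le_div_mul (by linarith)).trans (hdrift.trans ?_)
  gcongr

lemma exists_finset_early (hN : 16 ≤ N) (hS : 0 < S) (hq : IsClosestReturn α q)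
    (hSq : S ≤ q) (hqN : q ≤ N * S) (hqT : ‖q • α‖ ≤ 1 / T) (p : ι → UnitAddCircle)
    (x : UnitAddCircle) :
    ∃ A : Finset UnitAddCircle, A.card ≤ Fintype.card ι ∧
      ∀ i (k : ℕ), N ^ 2 * k ≤ T → dist (p i + k • α) x ≤ 1 / (6 * N * S) →
        ∃ c ∈ A, dist (p i + k • α) c ≤ 1 / (N ^ 2 * S) := by
  classical
  have hcluster : ∀ i, ∃ c, ∀ k : ℕ, N ^ 2 * k ≤ T →
      dist (p i + k • α) x ≤ 1 / (6 * N * S) → dist (p i + k • α) c ≤ 1 / (N ^ 2 * S) := by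
    intro i
    by_cases hex : ∃ l : ℕ, N ^ 2 * l ≤ T ∧ dist (p i + l • α) x ≤ 1 / (6 * N * S)
    · obtain ⟨l, hl, hlx⟩ := hex
      refine ⟨p i + l • α, fun k hk hkx ↦ ?_⟩
      have hkl := (dist_triangle_right _ _ x).trans (add_le_add hkx hlx)
      rw [dist_add_left] at hkl ⊢
      refine hq.dist_early_le hN hS hSq hqN hqT hk hl (hkl.trans_eq ?_)
      ring
    · exact ⟨0, fun k hk hkx ↦ absurd ⟨k, hk, hkx⟩ hex⟩
  choose c hc using hcluster
  exact ⟨Finset.univ.image c, Finset.card_image_le, fun i k hk hkx ↦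
    ⟨c i, Finset.mem_image_of_mem c (Finset.mem_univ i), hc i k hk hkx⟩⟩

lemma IsClosestReturn.card_filter_dist_le (hT : IsClosestReturn α T) (p x : UnitAddCircle) {w : ℝ}
    (hw : 0 ≤ w) :
    (((Finset.range T).filter fun k ↦ dist (p + k • α) x ≤ w).card : ℝ) ≤ 4 * T * w + 1 := by
  have hT1 : (1 : ℝ) ≤ T := mod_cast hT.1
  have hcard := card_mul_le_of_pairwise_le_dist
    (s := (Finset.range T).filter fun k ↦ dist (p + k • α) x ≤ w) (f := fun k : ℕ ↦ p + k • α)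
    (x := x) (δ := 1 / (4 * T)) (R := w) ?_ (by positivity) ?_ fun k hk ↦ (Finset.mem_filter.1 hk).2
  · rw [mul_one_div, ← sub_le_iff_le_add, ← sub_div, div_le_iff₀ (by positivity)] at hcard
    linarith
  · rw [mul_one_div, div_le_one (by positivity)]
    linarith
  · intro k hk l hl hkl
    have hkT := Finset.mem_range.1 (Finset.mem_filter.1 hk).1
    have hlT := Finset.mem_range.1 (Finset.mem_filter.1 hl).1
    rw [dist_add_left]
    refine le_of_eq_of_le ?_ (hT.one_div_two_mul_le_dist hkT hlT hkl)
    field_simp; norm_num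

lemma exists_finset_late (hN : 16 ≤ N) (hιN : 16 * Fintype.card ι ≤ N) (hS : 0 < S)
    (hNST : N * S ≤ T) (hT : IsClosestReturn α T) (p : ι → UnitAddCircle) (x z : UnitAddCircle) :
    ∃ B : Finset UnitAddCircle, 6 * S * B.card ≤ T ∧ z ∈ B ∧
      ∀ i, ∀ k < T, dist (p i + k • α) x ≤ 1 / (6 * N * S) → p i + k • α ∈ B := by
  classical
  set w : ℝ := 1 / (6 * N * S)
  let L (i : ι) : Finset ℕ := (Finset.range T).filter fun k ↦ dist (p i + k • α) x ≤ w
  let B := insert z (Finset.univ.biUnion fun i ↦ (L i).image fun k ↦ p i + k • α)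
  refine ⟨B, ?_, Finset.mem_insert_self _ _, fun i k hk hkx ↦ ?_⟩
  · have hN' : (16 : ℝ) ≤ N := mod_cast hN
    have hιN' : (16 * Fintype.card ι : ℝ) ≤ N := mod_cast hιN
    have hNST' : (N * S : ℝ) ≤ T := mod_cast hNST
    have hcard : (B.card : ℝ) ≤ Fintype.card ι * (4 * T * w + 1) + 1 := calc
      (B.card : ℝ) ≤ ∑ i, ((L i).card : ℝ) + 1 := mod_cast (Finset.card_insert_le _ _).trans
        (Nat.add_le_add_right (Finset.card_biUnion_le.trans
          (Finset.sum_le_sum fun i _ ↦ Finset.card_image_le)) 1)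
      _ ≤ ∑ _i : ι, (4 * T * w + 1) + 1 := by
        gcongr with i
        exact hT.card_filter_dist_le (p i) x (by positivity)
      _ = Fintype.card ι * (4 * T * w + 1) + 1 := by
        rw [Finset.sum_const, Finset.card_univ, nsmul_eq_mul]
    suffices 6 * S * B.card ≤ (T : ℝ) from mod_cast this
    calc
      6 * (S : ℝ) * B.card ≤ 6 * S * (N / 16 * (4 * T * w + 1) + 1) := by
        gcongr
        refine hcard.trans ?_
        gcongr
        linarith
      _ = T / 4 + 3 / 8 * (N * S) + 6 * S := by simp only [w]; field_simp; ring
      _ ≤ T := by nlinarith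
  · exact Finset.mem_insert_of_mem (Finset.mem_biUnion.2 ⟨i, Finset.mem_univ i,
      Finset.mem_image_of_mem _ (Finset.mem_filter.2 ⟨Finset.mem_range.2 hk, hkx⟩)⟩)

/-- A stage of the nested-arcs construction: a closest-return time, up to which the orbits have
already been dealt with, and the center of the arc that is kept. -/
structure Stage (α : UnitAddCircle) where
  time : ℕ
  center : UnitAddCircle
  isClosestReturn : IsClosestReturn α time

/-- The closed arc kept at a stage. Its radius is inversely proportional to the time of the stage;
`N` is a parameter of the whole construction, at least `16` times the number of orbits. -/
def Stage.arc (N : ℕ) (a : Stage α) : Set UnitAddCircle :=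
  closedBall a.center (1 / (8 * N * a.time))

lemma exists_center_avoiding (hN : 16 ≤ N) (hS : 0 < S) (hNST : N * S ≤ T)
    {A B : Finset UnitAddCircle} (hA : 16 * A.card ≤ N) (hB : 6 * S * B.card ≤ T)
    (x : UnitAddCircle) :
    ∃ x', dist x' x ≤ 1 / (8 * N * S) - 1 / (8 * N * T) ∧
      (∀ c ∈ A, 1 / (N ^ 2 * S) + 1 / (N ^ 4 * S) + 1 / (8 * N * T) < dist x' c) ∧
      ∀ c ∈ B, 1 / (N ^ 2 * T) + 1 / (8 * N * T) < dist x' c := by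
  have hN1 : (1 : ℝ) ≤ N := mod_cast (by omega : 1 ≤ N)
  have hS1 : (1 : ℝ) ≤ S := mod_cast hS
  have hR : 2 * (1 / (8 * N * S) - 1 / (8 * N * T) : ℝ) ≤ 1 := by
    have hNS : (1 : ℝ) ≤ N * S := one_le_mul_of_one_le_of_one_le hN1 hS1
    have hNS' : (1 : ℝ) / (8 * N * S) ≤ 1 / 2 := one_div_le_one_div_of_le two_pos (by linarith)
    have hNT : (0 : ℝ) ≤ 1 / (8 * N * T) := by positivity
    linarith
  have hsum := early_radii_add_late_radii_lt (mod_cast hN) (zero_lt_one.trans_le hS1)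
    (mod_cast hNST) (mod_cast hA : (16 * A.card : ℝ) ≤ N) (mod_cast hB : (6 * S * B.card : ℝ) ≤ T)
  obtain ⟨x', hx', havoid⟩ := exists_mem_closedBall_forall_lt_dist (A.disjSum B) (Sum.elim id id)
    (ρ := Sum.elim (fun _ ↦ 1 / (N ^ 2 * S) + 1 / (N ^ 4 * S) + 1 / (8 * N * T))
      fun _ ↦ 1 / (N ^ 2 * T) + 1 / (8 * N * T))
    (by rintro (_ | _) _ <;> simp only [Sum.elim_inl, Sum.elim_inr] <;> positivity) x hR
    (by simpa only [Finset.sum_disjSum, Sum.elim_inl, Sum.elim_inr, Finset.sum_const, nsmul_eq_mul]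
      using hsum)
  exact ⟨x', hx', fun c hc ↦ havoid (Sum.inl c) (Finset.inl_mem_disjSum.2 hc),
    fun c hc ↦ havoid (Sum.inr c) (Finset.inr_mem_disjSum.2 hc)⟩

lemma dist_center_le_of_dist_lt (hN : 16 ≤ N) (hS : 0 < S) {k : ℕ} (hSk : S ≤ k)
    {v x y : UnitAddCircle} (hyx : dist y x ≤ 1 / (8 * N * S)) (hvy : dist v y < 1 / (N ^ 4 * k)) :
    dist v x ≤ 1 / (6 * N * S) := by
  have hN' : (16 : ℝ) ≤ N := mod_cast hN
  have hvy' : (1 : ℝ) / (N ^ 4 * k) ≤ 1 / (24 * N * S) := by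
    gcongr
    nlinarith [pow_le_pow_left₀ (by norm_num) hN' 3]
  calc
    dist v x ≤ dist v y + dist y x := dist_triangle _ _ _
    _ ≤ 1 / (24 * N * S) + 1 / (8 * N * S) := by linarith
    _ = 1 / (6 * N * S) := by field_simp; norm_num

lemma exists_stage_avoiding (hα : ¬ IsOfFinAddOrder α) (hN : 16 ≤ N)
    (hιN : 16 * Fintype.card ι ≤ N) (p : ι → UnitAddCircle) (z : UnitAddCircle) (a : Stage α) :
    ∃ b : Stage α, a.time < b.time ∧ b.arc N ⊆ a.arc N ∧ z ∉ b.arc N ∧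
      ∀ y ∈ b.arc N, ∀ i (k : ℕ), a.time ≤ k → k < b.time →
        1 / (N ^ 4 * k) ≤ dist (p i + k • α) y := by
  obtain ⟨S, x, hS⟩ := a
  obtain ⟨q, T, hq, hT, hSq, hqN, hNST, hqT⟩ := hS.exists_le_lt hα
    (Nat.le_mul_of_pos_left S (by omega : 0 < N))
  obtain ⟨A, hAcard, hA⟩ := exists_finset_early hN hS.1 hq hSq hqN hqT p x
  obtain ⟨B, hBcard, hzB, hB⟩ := exists_finset_late hN hιN hS.1 hNST.le hT p x z
  obtain ⟨x', hx', hxA, hxB⟩ := exists_center_avoiding hN hS.1 hNST.le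
    ((Nat.mul_le_mul_left 16 hAcard).trans hιN) hBcard x
  have hsub : closedBall x' (1 / (8 * N * T)) ⊆ closedBall x (1 / (8 * N * S)) :=
    closedBall_subset_closedBall' (by linarith)
  have : (0 : ℝ) < S := mod_cast hS.1
  have : (0 : ℝ) < T := mod_cast hT.1
  refine ⟨⟨T, x', hT⟩, hSq.trans_lt (hqN.trans_lt hNST), hsub, fun hz ↦ ?_,
    fun y hy i k hSk hkT ↦ ?_⟩
  · have hfar := hxB z hzB
    have hpos : (0 : ℝ) < 1 / (N ^ 2 * T) := by positivity
    rw [Stage.arc, mem_closedBall'] at hz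
    linarith
  · by_contra! hclose
    have hyx : dist y x ≤ 1 / (8 * N * S) := hsub hy
    replace hy : dist x' y ≤ 1 / (8 * N * T) := mem_closedBall'.1 hy
    have hkx := dist_center_le_of_dist_lt hN hS.1 hSk hyx hclose
    rcases le_or_gt (N ^ 2 * k) T with hearly | hlate
    · obtain ⟨c, hc, hkc⟩ := hA i k hearly hkx
      have hkS : (1 : ℝ) / (N ^ 4 * k) ≤ 1 / (N ^ 4 * S) := by gcongr
      linarith [hxA c hc, dist_triangle4 x' y (p i + k • α) c, dist_comm y (p i + k • α)]
    · have hkT' : (1 : ℝ) / (N ^ 4 * k) ≤ 1 / (N ^ 2 * T) := by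
        have : (T : ℝ) ≤ N ^ 2 * k := mod_cast hlate.le
        rw [show (N ^ 4 * k : ℝ) = N ^ 2 * (N ^ 2 * k) by ring]
        gcongr
      linarith [hxB _ (hB i k hkT hkx), dist_triangle_right x' (p i + k • α) y]

lemma exists_stage_time_gt (hα : ¬ IsOfFinAddOrder α) (x : UnitAddCircle) (M : ℕ) :
    ∃ a : Stage α, M < a.time ∧ a.center = x := by
  obtain ⟨-, T, -, hT, -, -, hMT, -⟩ :=
    (IsClosestReturn.one α).exists_le_lt hα (Nat.le_add_left 1 M)
  exact ⟨⟨T, x, hT⟩, Nat.lt_of_succ_lt hMT, rfl⟩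

lemma exists_mem_arc_avoiding (hα : ¬ IsOfFinAddOrder α) (hN : 16 ≤ N)
    (hιN : 16 * Fintype.card ι ≤ N) (p : ι → UnitAddCircle) {Z : Set UnitAddCircle}
    (hZ : Z.Countable) (a : Stage α) :
    ∃ y ∈ a.arc N, y ∉ Z ∧ ∀ i (k : ℕ), a.time ≤ k → 1 / (N ^ 4 * k) ≤ dist (p i + k • α) y := by
  obtain ⟨z, hz⟩ := Set.countable_iff_exists_subset_range.1 hZ
  choose next hlt hsub hnotMem hfar using fun t ↦ exists_stage_avoiding hα hN hιN p (z t)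
  let s (t : ℕ) : Stage α := Nat.rec a next t
  have hmono : StrictMono fun t ↦ (s t).time := strictMono_nat_of_lt_succ fun t ↦ hlt t (s t)
  obtain ⟨y, hy⟩ : (⋂ t, (s t).arc N).Nonempty :=
    IsCompact.nonempty_iInter_of_sequence_nonempty_isCompact_isClosed _ (fun t ↦ hsub t (s t))
      (fun t ↦ nonempty_closedBall.2 (by positivity)) isClosed_closedBall.isCompact
      fun t ↦ isClosed_closedBall
  rw [Set.mem_iInter] at hy
  refine ⟨y, hy 0, fun hyZ ↦ ?_, fun i k hk ↦ ?_⟩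
  · obtain ⟨t, rfl⟩ := hz hyZ
    exact hnotMem t (s t) (hy (t + 1))
  · obtain ⟨t, htk, hkt⟩ : ∃ t, (s t).time ≤ k ∧ k < (s (t + 1)).time := by
      obtain ⟨t, htk, hkt⟩ := hmono.exists_between_of_tendsto_atTop hmono.tendsto_atTop
        (Nat.lt_succ_of_le hk : (s 0).time < k + 1)
      exact ⟨t, Nat.le_of_lt_succ htk, hkt⟩
    exact hfar t (s t) y (hy (t + 1)) i k htk hkt

end Stage

namespace BadlyApproximablePair

variable {B C θ : ℝ} {x y : AddCircle (1 : ℝ)}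

lemma anti (h : BadlyApproximablePair B θ x y) (hCB : C ≤ B) : BadlyApproximablePair C θ x y :=
  ⟨h.1.imp fun _ hN k hk ↦ hCB.trans (hN k hk), h.2⟩

lemma of_one_div_mul_le_dist {S : ℕ} (hS : 0 < S)
    (hdist : ∀ k : ℕ, S ≤ k → 1 / (C * k) ≤ dist (x + k • (θ : AddCircle (1 : ℝ))) y)
    (hne : ∀ k : ℤ, x + k • (θ : AddCircle (1 : ℝ)) ≠ y) : BadlyApproximablePair (1 / C) θ x y := by
  refine ⟨⟨S, fun k hk ↦ ?_⟩, fun k _ ↦ hne k⟩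
  lift k to ℕ using (Int.natCast_nonneg S).trans hk
  rw [Nat.cast_le] at hk
  have hk0 : (0 : ℝ) < k := mod_cast hS.trans_le hk
  rw [natCast_zsmul, Int.cast_natCast, ← div_le_iff₀' hk0, div_div]
  exact hdist k hk

lemma of_isOfFinAddOrder (hθ : IsOfFinAddOrder (θ : AddCircle (1 : ℝ)))
    (hne : ∀ k : ℤ, x + k • (θ : AddCircle (1 : ℝ)) ≠ y) : BadlyApproximablePair B θ x y := by
  refine ⟨?_, fun k _ ↦ hne k⟩
  have horbit : (Set.range fun k : ℤ ↦ x + k • (θ : AddCircle (1 : ℝ))).Finite := by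
    rw [Set.range_comp' (x + ·)]
    exact (finite_zmultiples.2 hθ).image _
  set δ := infDist y (Set.range fun k : ℤ ↦ x + k • (θ : AddCircle (1 : ℝ)))
  have hδ0 : 0 < δ :=
    (horbit.isClosed.notMem_iff_infDist_pos (Set.range_nonempty _)).1 fun ⟨k, hk⟩ ↦ hne k hk
  obtain ⟨S, hS⟩ := exists_nat_ge (B / δ)
  refine ⟨S, fun k hk ↦ ?_⟩
  have hSk : (S : ℝ) ≤ k := mod_cast hk
  calc
    B ≤ k * δ := (div_le_iff₀ hδ0).1 (hS.trans hSk)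
    _ ≤ k * dist (x + k • (θ : AddCircle (1 : ℝ))) y := by
      rw [dist_comm]
      gcongr
      · exact (Nat.cast_nonneg S).trans hSk
      · exact infDist_le_dist_of_mem (Set.mem_range_self k)

end BadlyApproximablePair

lemma dense_badlyApproximablePair_of_isOfFinAddOrder {ι : Type*} [Countable ι] {θ : ℝ}
    (hθ : IsOfFinAddOrder (θ : AddCircle (1 : ℝ))) (B : ℝ) (p : ι → AddCircle (1 : ℝ)) :
    Dense {q | ∀ i, BadlyApproximablePair B θ (p i) q} := by
  have horbits :=
    Set.countable_range fun ik : ι × ℤ ↦ p ik.1 + ik.2 • (θ : AddCircle (1 : ℝ))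
  refine (dense_compl_of_countable horbits).mono fun q hq i ↦ .of_isOfFinAddOrder hθ fun k hk ↦ ?_
  exact hq ⟨(i, k), hk⟩

lemma dense_badlyApproximablePair_of_not_isOfFinAddOrder {ι : Type*} [Fintype ι] {N : ℕ} {θ : ℝ}
    (hθ : ¬ IsOfFinAddOrder (θ : AddCircle (1 : ℝ))) (hN : 16 ≤ N) (hιN : 16 * Fintype.card ι ≤ N)
    (p : ι → AddCircle (1 : ℝ)) :
    Dense {q | ∀ i, BadlyApproximablePair (1 / N ^ 4) θ (p i) q} := by
  rw [Metric.dense_iff]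
  intro x ε hε
  obtain ⟨M, hM⟩ := exists_nat_gt (1 / ε)
  obtain ⟨a, hMa, rfl⟩ := exists_stage_time_gt hθ x M
  have hradius : 1 / (8 * N * a.time) < ε := by
    have hN' : (1 : ℝ) ≤ 8 * N := mod_cast (by omega : 1 ≤ 8 * N)
    have hMa' : (M : ℝ) < a.time := mod_cast hMa
    rw [one_div_lt (by positivity [a.isClosestReturn.1]) hε]
    nlinarith
  obtain ⟨y, hya, hyorbit, hfar⟩ := exists_mem_arc_avoiding hθ hN hιN p
    (Set.countable_range fun ik : ι × ℤ ↦ p ik.1 + ik.2 • (θ : AddCircle (1 : ℝ))) a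
  exact ⟨y, closedBall_subset_ball hradius hya, fun i ↦ .of_one_div_mul_le_dist
    a.isClosestReturn.1 (hfar i) fun k hk ↦ hyorbit ⟨(i, k), hk⟩⟩

theorem dense_badly_approximable_partners_general {ι : Type*} [Fintype ι] (θ : ℝ)
    (p : ι → AddCircle (1 : ℝ)) :
    Dense {q | ∀ i, BadlyApproximablePair (1 / (16 * Fintype.card ι : ℝ) ^ 4) θ (p i) q} := by
  by_cases hθ : IsOfFinAddOrder (θ : AddCircle (1 : ℝ))
  · exact dense_badlyApproximablePair_of_isOfFinAddOrder hθ _ p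
  rcases isEmpty_or_nonempty ι with hι | hι
  · simp only [IsEmpty.forall_iff, Set.ofPred_true, dense_univ]
  · have hcard : 0 < Fintype.card ι := Fintype.card_pos
    exact_mod_cast dense_badlyApproximablePair_of_not_isOfFinAddOrder hθ (by omega) le_rfl p

lemma one_div_sixty_four_pow_le {r : ℕ} (hr : 1 ≤ r) :
    (1 / 64 : ℝ) ^ (3 * r) ≤ 1 / (16 * r) ^ 4 := by
  rw [one_div_pow]
  gcongr
  have hr2 : (r : ℝ) ≤ 2 ^ (r - 1) := by
    have : r - 1 < 2 ^ (r - 1) := Nat.lt_two_pow_self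
    exact_mod_cast (by omega : r ≤ 2 ^ (r - 1))
  calc
    (16 * r : ℝ) ^ 4 ≤ (16 * 2 ^ (r - 1)) ^ 4 := by gcongr
    _ = 2 ^ (16 + 4 * (r - 1)) := by rw [mul_pow, pow_add, pow_mul']; norm_num
    _ ≤ 2 ^ (6 * (3 * r)) := pow_le_pow_right₀ one_le_two (by omega)
    _ = 64 ^ (3 * r) := by rw [pow_mul]; norm_num

/-- Density consequence of Tseng's theorem and Schmidt's intersection lemma: for any
rotation `R_θ` and points `p₁, …, p_r` of `ℝ/ℤ`, the set of `q` such that every pair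
`(p_i, q)` is `(1/64)^{3r}`-badly approximable for `R_θ` is dense in `ℝ/ℤ`. -/
theorem dense_badly_approximable_partners (θ : ℝ) (r : ℕ) (hr : 1 ≤ r)
    (p : Fin r → AddCircle (1 : ℝ)) :
    Dense {q : AddCircle (1 : ℝ) |
      ∀ i : Fin r, BadlyApproximablePair ((1 / 64 : ℝ) ^ (3 * r)) θ (p i) q} := by
  refine (dense_badly_approximable_partners_general θ p).mono fun q hq i ↦ (hq i).anti ?_
  simpa only [Fintype.card_fin] using one_div_sixty_four_pow_le hr
end

section
/- Let θ ∈ ℝ and k ≥ 1. Then the set of tuples (p₁, …, p_k) ∈ (ℝ/ℤ)^k such that for all i ≠ j the pair (p_i, p_j) is (1/64)^{3(k−1)}-badly approximable for the rotation R_θ is dense in (ℝ/ℤ)^k. -/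
/-!
Points are added one coordinate at a time, so it suffices that, for a finite set `X` in the circle
and `α = θ mod 1`, the points `y` with `max |n| N * ‖y - x - nα‖ ≥ B` for some `N`, all `n : ℤ` and
all `x ∈ X` are dense. If `α` has finite order, every point off finitely many finite orbits works.

If `α` has infinite order, build nested intervals of length `c / T`, where `T` runs through
denominators of best approximations to `α`. Put `M = |X| + 1` and let `q < T'` be the consecutive
denominators with `q < 4M²T ≤ T'`. To pass from scale `T` to scale `T'`, the points `x + nα` with
`|n| < T' / 2` are avoided in two rounds. Those with `|n| ‖qα‖ < A` form clusters: two of them that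
are close differ by `mα` with `q ‖mα‖ + |m| ‖qα‖ < 1`, and then cross-multiplication gives
`q ‖mα‖ = |m| ‖qα‖`, so a cluster is narrow. The remaining ones are `‖qα‖`-separated, where
`‖qα‖ ≥ 1 / (2T')`. In both rounds each `x` spoils at most one of `M` disjoint blocks, hence some
block survives.
-/

open Set

theorem dense_setOf_pairwise {ι Y : Type*} [Fintype ι] [TopologicalSpace Y] {R : Y → Y → Prop}
    [Std.Symm R]
    (hR : ∀ X : Finset Y, X.card < Fintype.card ι → Dense {y | ∀ x ∈ X, R x y}) :
    Dense {p : ι → Y | Pairwise fun i j ↦ R (p i) (p j)} := by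
  classical
  rw [dense_iff_inter_open]
  rintro V hV ⟨p₀, hp₀⟩
  obtain ⟨u, hu, huV⟩ := isOpen_pi_iff'.1 hV p₀ hp₀
  have partial_tuple (s : Finset ι) :
      ∃ p : ι → Y, (∀ i, p i ∈ u i) ∧ (s : Set ι).Pairwise fun i j ↦ R (p i) (p j) := by
    induction s using Finset.induction_on with
    | empty => exact ⟨p₀, fun i ↦ (hu i).2, by simp⟩
    | insert l s hl ih =>
      obtain ⟨p, hpu, hps⟩ := ih
      have hcard : (s.image p).card < Fintype.card ι :=
        Finset.card_image_le.trans_lt (Finset.card_lt_univ_of_notMem hl)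
      obtain ⟨y, hyu, hy⟩ := (hR _ hcard).inter_open_nonempty _ (hu l).1 ⟨_, (hu l).2⟩
      have update_eq {i : ι} (hi : i ∈ s) : Function.update p l y i = p i :=
        Function.update_of_ne (ne_of_mem_of_not_mem hi hl) _ _
      refine ⟨Function.update p l y, fun i ↦ ?_, ?_⟩
      · rcases eq_or_ne i l with rfl | hil
        · simpa using hyu
        · simpa [hil] using hpu i
      · have : Std.Symm fun i j ↦ R (Function.update p l y i) (Function.update p l y j) :=
          ⟨fun _ _ h ↦ symm_of R h⟩
        rw [Finset.coe_insert, Set.pairwise_insert_of_symm_of_notMem (by simpa using hl)]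
        refine ⟨fun i hi j hj hij ↦ ?_, fun i hi ↦ ?_⟩
        · simpa only [update_eq hi, update_eq hj] using hps hi hj hij
        · rw [update_eq hi, Function.update_self]
          exact symm_of R (hy _ (Finset.mem_image_of_mem p hi))
  obtain ⟨p, hpu, hp⟩ := partial_tuple Finset.univ
  exact ⟨p, huV fun i _ ↦ hpu i, fun i j hij ↦ hp (by simp) (by simp) hij⟩

theorem exists_mem_forall_exists_of_refinement {Y : Type*} [TopologicalSpace Y] [T2Space Y]
    {P : ℕ → Set Y → Prop} (hcompact : ∀ t K, P t K → IsCompact K)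
    (hnonempty : ∀ t K, P t K → K.Nonempty)
    (hrefine : ∀ t K, P t K → ∃ t' K', P t' K' ∧ t < t' ∧ K' ⊆ K) {t₀ : ℕ} {K₀ : Set Y}
    (h₀ : P t₀ K₀) :
    ∃ y ∈ K₀, ∀ m, ∃ t K, P t K ∧ m ≤ t ∧ y ∈ K := by
  have hnext (s : {s : ℕ × Set Y // P s.1 s.2}) :
      ∃ s' : {s : ℕ × Set Y // P s.1 s.2}, s.1.1 < s'.1.1 ∧ s'.1.2 ⊆ s.1.2 := by
    obtain ⟨t', K', hP, hlt, hsub⟩ := hrefine _ _ s.2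
    exact ⟨⟨(t', K'), hP⟩, hlt, hsub⟩
  choose next next_lt next_subset using hnext
  let S (j : ℕ) := next^[j] ⟨(t₀, K₀), h₀⟩
  have S_succ (j : ℕ) : S (j + 1) = next (S j) := Function.iterate_succ_apply' next j _
  have S_strictMono : StrictMono fun j ↦ (S j).1.1 :=
    strictMono_nat_of_lt_succ fun j ↦ by simpa only [S_succ] using next_lt (S j)
  obtain ⟨y, hy⟩ := IsCompact.nonempty_iInter_of_sequence_nonempty_isCompact_isClosed
    (fun j ↦ (S j).1.2) (fun j ↦ by simpa only [S_succ] using next_subset (S j))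
    (fun j ↦ hnonempty _ _ (S j).2) (hcompact _ _ (S 0).2)
    (fun j ↦ (hcompact _ _ (S j).2).isClosed)
  rw [mem_iInter] at hy
  exact ⟨y, hy 0, fun m ↦ ⟨_, _, (S m).2, S_strictMono.id_le m, hy m⟩⟩

/-- The blocks `[a + 2ht, a + 2ht + h]`, `t < M`, are `h` apart, so each `E x` meets at most one of
them. -/
theorem exists_Icc_subset_disjoint {ι : Type*} {X : Finset ι} {M : ℕ} (hX : X.card < M)
    {E : ι → Set ℝ} {a L h : ℝ} (hh : 0 ≤ h) (hL : 2 * M * h ≤ L)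
    (hE : ∀ x ∈ X, ∀ y ∈ Icc a (a + L) ∩ E x, ∀ y' ∈ Icc a (a + L) ∩ E x, y' - y < h) :
    ∃ a', Icc a' (a' + h) ⊆ Icc a (a + L) ∧ ∀ x ∈ X, Disjoint (Icc a' (a' + h)) (E x) := by
  let left (t : ℕ) : ℝ := a + 2 * h * t
  have block_subset {t : ℕ} (ht : t < M) : Icc (left t) (left t + h) ⊆ Icc a (a + L) := by
    have htM : (t : ℝ) + 1 ≤ M := by exact_mod_cast ht
    have hle : 2 * h * (t + 1) ≤ 2 * h * M := by gcongr
    have hnonneg : 0 ≤ 2 * h * t := by positivity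
    exact Icc_subset_Icc (by linarith) (by simp only [left]; linarith)
  by_contra! hcon
  have hhit (t : Fin M) : ∃ x ∈ X, (Icc (left t) (left t + h) ∩ E x).Nonempty := by
    obtain ⟨x, hx, hxt⟩ := hcon _ (block_subset t.2)
    exact ⟨x, hx, not_disjoint_iff_nonempty_inter.1 hxt⟩
  choose x hx y hy using hhit
  obtain ⟨t, -, t', -, hne, hxx⟩ := Finset.exists_ne_map_eq_of_card_lt_of_maps_to
    (s := Finset.univ) (by simpa using hX) (fun t _ ↦ hx t)
  wlog hlt : t < t' generalizing t t'
  · exact this t' t hne.symm hxx.symm (hne.lt_or_gt.resolve_left hlt)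
  have hgap : 2 * h * (t + 1) ≤ 2 * h * t' := by
    gcongr
    exact_mod_cast hlt
  have hclose := hE (x t) (hx t) (y t) ⟨block_subset t.2 (hy t).1, (hy t).2⟩
    (y t') ⟨block_subset t'.2 (hy t').1, hxx ▸ (hy t').2⟩
  have hupper : y t ≤ left t + h := (hy t).1.2
  have hlower : left t' ≤ y t' := (hy t').1.1
  simp only [left] at hupper hlower
  linarith

/-- The two-sided form of `k ‖z - kα‖ ≥ B` for all large `k`. Bounding `|n|` from below by `N`
turns the condition on the tail `|n| ≥ N` and, for `B > 0`, the condition `z ∉ ℤα` into a single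
inequality. The relation `(x, y) ↦ TwoSidedBadlyApproximable B α (y - x)` is symmetric and implies
`BadlyApproximablePair` for the rotation by `α`. -/
def TwoSidedBadlyApproximable {G : Type*} [NormedAddCommGroup G] (B : ℝ) (α z : G) : Prop :=
  ∃ N : ℝ, ∀ n : ℤ, B ≤ max |(n : ℝ)| N * ‖z - n • α‖

namespace TwoSidedBadlyApproximable

theorem neg {G : Type*} [NormedAddCommGroup G] {B : ℝ} {α z : G}
    (h : TwoSidedBadlyApproximable B α z) : TwoSidedBadlyApproximable B α (-z) := by
  obtain ⟨N, hN⟩ := h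
  refine ⟨N, fun n ↦ (hN (-n)).trans_eq ?_⟩
  rw [Int.cast_neg, abs_neg, ← norm_neg, neg_smul]
  congr 2
  abel

theorem of_isOfFinAddOrder {G : Type*} [NormedAddCommGroup G] {α z : G} (B : ℝ)
    (hα : IsOfFinAddOrder α) (hz : z ∉ AddSubgroup.zmultiples α) :
    TwoSidedBadlyApproximable B α z := by
  let d := Metric.infDist z (AddSubgroup.zmultiples α)
  have hd : 0 < d :=
    (hα.finite_zmultiples.isClosed.notMem_iff_infDist_pos ⟨0, zero_mem _⟩).1 hz
  refine ⟨B / d, fun n ↦ ?_⟩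
  have hdn : d ≤ ‖z - n • α‖ := by
    rw [← dist_eq_norm]
    exact Metric.infDist_le_dist_of_mem (AddSubgroup.zsmul_mem_zmultiples α n)
  calc B = B / d * d := (div_mul_cancel₀ B hd.ne').symm
    _ ≤ max |(n : ℝ)| (B / d) * ‖z - n • α‖ := by
      gcongr
      exact le_max_right _ _

theorem badlyApproximablePair {B θ : ℝ} {x y : UnitAddCircle} (hB : 0 < B)
    (h : TwoSidedBadlyApproximable B (θ : UnitAddCircle) (y - x)) :
    BadlyApproximablePair B θ x y := by
  obtain ⟨N, hN⟩ := h
  have dist_eq (k : ℤ) :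
      dist (x + k • (θ : UnitAddCircle)) y = ‖y - x - k • (θ : UnitAddCircle)‖ := by
    rw [dist_comm, dist_eq_norm, sub_sub]
  refine ⟨⟨⌈N⌉₊, fun k hk ↦ ?_⟩, fun k _ hxy ↦ ?_⟩
  · have hkN : N ≤ k := (Nat.le_ceil N).trans (by exact_mod_cast hk)
    have hk₀ : (0 : ℝ) ≤ k := by exact_mod_cast (Int.natCast_nonneg _).trans hk
    simpa only [dist_eq, abs_of_nonneg hk₀, max_eq_left hkN] using hN k
  · have hle := hN k
    rw [← dist_eq, hxy, dist_self, mul_zero] at hle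
    exact hle.not_gt hB

end TwoSidedBadlyApproximable

/-- `T` is a denominator of a best approximation to `α`: `‖Tα‖` beats all earlier `‖nα‖`. These are
the scales of the nested-interval construction. -/
def IsBestDenominator {G : Type*} [NormedAddCommGroup G] (α : G) (T : ℕ) : Prop :=
  0 < T ∧ ∀ n, 0 < n → n < T → ‖T • α‖ < ‖n • α‖

/-- `q < q'` are consecutive denominators of best approximations to `α`. Ties for the minimum of
`‖nα‖` over `0 < n < q'` are allowed; for `α` of infinite order there are none on the circle. -/
structure IsConsecutiveBest {G : Type*} [NormedAddCommGroup G] (α : G) (q q' : ℕ) : Prop where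
  pos : 0 < q
  lt : q < q'
  norm_lt : ‖q' • α‖ < ‖q • α‖
  norm_le : ∀ n, 0 < n → n < q' → ‖q • α‖ ≤ ‖n • α‖

theorem exists_coe_eq_and_abs_eq_norm {p : ℝ} (z : AddCircle p) :
    ∃ t : ℝ, (t : AddCircle p) = z ∧ |t| = ‖z‖ := by
  obtain ⟨s, rfl⟩ := QuotientAddGroup.mk_surjective z
  refine ⟨s - round (p⁻¹ * s) * p, ?_, (AddCircle.norm_eq p).symm⟩
  rw [AddCircle.coe_sub, sub_eq_self, AddCircle.coe_eq_zero_iff]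
  exact ⟨round (p⁻¹ * s), zsmul_eq_mul _ _⟩

/-- If `s` and `t` lift `nα` and `mα`, then `ms - nt` is an integer multiple of `p`, hence zero. -/
theorem mul_norm_zsmul_eq_of_add_lt {p : ℝ} {α : AddCircle p} {m n : ℤ}
    (h : |(m : ℝ)| * ‖n • α‖ + |(n : ℝ)| * ‖m • α‖ < |p|) :
    |(m : ℝ)| * ‖n • α‖ = |(n : ℝ)| * ‖m • α‖ := by
  obtain ⟨s, hs, hs_abs⟩ := exists_coe_eq_and_abs_eq_norm (n • α)
  obtain ⟨t, ht, ht_abs⟩ := exists_coe_eq_and_abs_eq_norm (m • α)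
  rw [← hs_abs, ← ht_abs, ← abs_mul, ← abs_mul] at h ⊢
  have hcoe : ((m * s - n * t : ℝ) : AddCircle p) = 0 := by
    rw [AddCircle.coe_sub, ← zsmul_eq_mul, ← zsmul_eq_mul, AddCircle.coe_zsmul,
      AddCircle.coe_zsmul, hs, ht, smul_comm, sub_self]
  obtain ⟨r, hr⟩ := (AddCircle.coe_eq_zero_iff p).1 hcoe
  rw [zsmul_eq_mul] at hr
  have hr_lt : |(r : ℝ)| < 1 := by
    have hrp : |(r : ℝ)| * |p| < |p| := by
      rw [← abs_mul, hr]
      exact (abs_sub _ _).trans_lt h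
    exact (mul_lt_iff_lt_one_left (by nlinarith [abs_nonneg (r : ℝ), abs_nonneg p])).1 hrp
  have hr_zero : r = 0 := Int.abs_lt_one_iff.1 (by exact_mod_cast hr_lt)
  rw [hr_zero, Int.cast_zero, zero_mul, eq_comm, sub_eq_zero] at hr
  rw [hr]

theorem abs_norm_zsmul_sub_abs_sub_le {α x : UnitAddCircle} {y y' ρ : ℝ} {n n' : ℤ}
    (hyy : |y' - y| ≤ 1 / 2) (hy : ‖(y : UnitAddCircle) - x - n • α‖ ≤ ρ)
    (hy' : ‖(y' : UnitAddCircle) - x - n' • α‖ ≤ ρ) :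
    |‖(n' - n) • α‖ - (|y' - y|)| ≤ 2 * ρ := by
  have hnorm : ‖((y' - y : ℝ) : UnitAddCircle)‖ = |y' - y| :=
    (AddCircle.norm_coe_eq_abs_iff 1 one_ne_zero).2 (by simpa using hyy)
  calc |‖(n' - n) • α‖ - (|y' - y|)|
      ≤ ‖(n' - n) • α - ((y' - y : ℝ) : UnitAddCircle)‖ := hnorm ▸ abs_norm_sub_norm_le _ _
    _ = ‖((y : UnitAddCircle) - x - n • α) - ((y' : UnitAddCircle) - x - n' • α)‖ := by
      rw [AddCircle.coe_sub, sub_smul]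
      congr 1
      abel
    _ ≤ 2 * ρ := by linarith [norm_sub_le ((y : UnitAddCircle) - x - n • α) (y' - x - n' • α)]

theorem exists_isConsecutiveBest {α : UnitAddCircle} (hα : ¬IsOfFinAddOrder α) {Q : ℕ}
    (hQ : 1 < Q) : ∃ q q', q < Q ∧ Q ≤ q' ∧ IsConsecutiveBest α q q' := by
  classical
  obtain ⟨q, hq, hq_min⟩ := Finset.exists_min_image (Finset.Ico 1 Q) (fun n ↦ ‖n • α‖)
    ⟨1, by simpa using hQ⟩
  obtain ⟨hq_pos, hqQ⟩ := Finset.mem_Ico.1 hq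
  have hnorm_pos : 0 < ‖q • α‖ :=
    norm_pos_iff.2 fun h ↦ hα (isOfFinAddOrder_iff_nsmul_eq_zero.2 ⟨q, hq_pos, h⟩)
  have hsmaller : ∃ n, 0 < n ∧ ‖n • α‖ < ‖q • α‖ := by
    obtain ⟨N, hN⟩ := exists_nat_one_div_lt hnorm_pos
    obtain ⟨n, hn, hnN⟩ := AddCircle.exists_norm_nsmul_le α N.succ_pos
    refine ⟨n, hn.1, hnN.trans_lt (lt_of_le_of_lt ?_ hN)⟩
    push_cast
    gcongr
    linarith
  obtain ⟨hq'_pos, hq'_lt⟩ := Nat.find_spec hsmaller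
  have hq'_min (n : ℕ) (hn : 0 < n) (hnq' : n < Nat.find hsmaller) : ‖q • α‖ ≤ ‖n • α‖ :=
    not_lt.1 fun h ↦ Nat.find_min hsmaller hnq' ⟨hn, h⟩
  have hQq' : Q ≤ Nat.find hsmaller :=
    not_lt.1 fun h ↦ (hq_min _ (Finset.mem_Ico.2 ⟨hq'_pos, h⟩)).not_gt hq'_lt
  exact ⟨q, Nat.find hsmaller, hqQ, hQq', hq_pos, hqQ.trans_le hQq', hq'_lt, hq'_min⟩

namespace IsConsecutiveBest

section NormedGroup

variable {G : Type*} [NormedAddCommGroup G] {α : G} {q q' : ℕ}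

theorem isBestDenominator (h : IsConsecutiveBest α q q') : IsBestDenominator α q' :=
  ⟨h.pos.trans h.lt, fun n hn hnq' ↦ h.norm_lt.trans_le (h.norm_le n hn hnq')⟩

theorem le_of_isBestDenominator (h : IsConsecutiveBest α q q') {T : ℕ}
    (hT : IsBestDenominator α T) (hTq' : T < q') : T ≤ q :=
  not_lt.1 fun hqT ↦ (h.norm_le T hT.1 hTq').not_gt (hT.2 q h.pos hqT)

theorem norm_le_norm_zsmul (h : IsConsecutiveBest α q q') {n : ℤ} (hn : n ≠ 0)
    (hnq' : |n| < q') : ‖q • α‖ ≤ ‖n • α‖ := by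
  rw [← norm_natAbs_smul]
  exact h.norm_le _ (Int.natAbs_pos.2 hn) (by zify; exact hnq')

end NormedGroup

variable {α : UnitAddCircle} {q q' : ℕ}

theorem norm_le_inv (h : IsConsecutiveBest α q q') : ‖q • α‖ ≤ 1 / q' := by
  have hq' : 1 < q' := Nat.lt_of_le_of_lt h.pos h.lt
  obtain ⟨n, hn, hnorm⟩ := AddCircle.exists_norm_nsmul_le α (Nat.sub_pos_of_lt hq')
  rw [Nat.sub_add_cancel hq'.le] at hnorm
  exact (h.norm_le n hn.1 (by have := hn.2; omega)).trans hnorm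

theorem inv_two_mul_le_norm (h : IsConsecutiveBest α q q') : 1 / (2 * q') ≤ ‖q • α‖ := by
  have hq' : (0 : ℝ) < q' := by exact_mod_cast h.pos.trans h.lt
  have hqq' : (q : ℝ) < q' := by exact_mod_cast h.lt
  have hstrict : (q : ℝ) * ‖q' • α‖ < q' * ‖q • α‖ :=
    mul_lt_mul' hqq'.le h.norm_lt (norm_nonneg _) hq'
  have hone : 1 ≤ (q : ℝ) * ‖q' • α‖ + q' * ‖q • α‖ := by
    by_contra! hlt
    have heq := mul_norm_zsmul_eq_of_add_lt (α := α) (m := q) (n := q') (by simpa using hlt)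
    exact hstrict.ne (by simpa using heq)
  rw [div_le_iff₀ (by positivity)]
  linarith

end IsConsecutiveBest

theorem exists_isBestDenominator_ge {α : UnitAddCircle} (hα : ¬IsOfFinAddOrder α) (N : ℕ) :
    ∃ T, IsBestDenominator α T ∧ N ≤ T := by
  obtain ⟨q, T, -, hNT, h⟩ := exists_isConsecutiveBest hα (Q := N + 2) (by omega)
  exact ⟨T, h.isBestDenominator, by omega⟩

theorem exists_Icc_subset_forall_lt_norm {α : UnitAddCircle} {X : Finset UnitAddCircle} {M : ℕ}
    (hX : X.card < M) {P : ℤ → Prop} {L h ρ : ℝ} (hL_half : L ≤ 1 / 2) (hh : 0 ≤ h)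
    (hL : 2 * M * h ≤ L)
    (hP : ∀ n n', P n → P n' → ‖(n' - n) • α‖ ≤ L + 2 * ρ → ‖(n' - n) • α‖ + 2 * ρ < h) (a : ℝ) :
    ∃ a', Icc a' (a' + h) ⊆ Icc a (a + L) ∧ ∀ y ∈ Icc a' (a' + h), ∀ x ∈ X, ∀ n, P n →
      ρ < ‖(y : UnitAddCircle) - x - n • α‖ := by
  let E (x : UnitAddCircle) : Set ℝ := {y | ∃ n, P n ∧ ‖(y : UnitAddCircle) - x - n • α‖ ≤ ρ}
  have hE : ∀ x ∈ X, ∀ y ∈ Icc a (a + L) ∩ E x, ∀ y' ∈ Icc a (a + L) ∩ E x, y' - y < h := by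
    rintro x - y ⟨hy, n, hn, hyn⟩ y' ⟨hy', n', hn', hyn'⟩
    have hyy : |y' - y| ≤ L := abs_le.2 ⟨by linarith [hy.2, hy'.1], by linarith [hy.1, hy'.2]⟩
    obtain ⟨hlower, hupper⟩ := abs_le.1
      (abs_norm_zsmul_sub_abs_sub_le (hyy.trans hL_half) hyn hyn')
    linarith [hP n n' hn hn' (by linarith), le_abs_self (y' - y)]
  obtain ⟨a', hsub, hdisj⟩ := exists_Icc_subset_disjoint hX hh hL hE
  exact ⟨a', hsub, fun y hy x hx n hn ↦ not_le.1 fun hle ↦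
    disjoint_left.1 (hdisj x hx) hy ⟨n, hn, hle⟩⟩

/-- Constants for one step of the nested-interval construction avoiding fewer than `M` orbits.
At scale `T` the interval has length `c / T`; if the next scale has predecessor `q`, an index `n` is
treated as part of a cluster when `|n| ‖qα‖ < A`. The points in a cluster are avoided by `2B / T`,
the others by `(B / A) ‖qα‖`; both distances give the constant `B`. The `isolated` inequalities say
that at most one cluster, respectively point, of each orbit is met, the `narrow` ones that its
neighbourhood is shorter than the subinterval to be chosen. -/
structure AdmissibleScales (M : ℕ) (A B c : ℝ) : Prop where
  A_pos : 0 < A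
  B_pos : 0 < B
  cluster_isolated : 4 * M ^ 2 * (c + 4 * B) + 2 * A < 1
  cluster_narrow : 2 * M * (2 * A + 4 * B) < c
  point_isolated : 2 * M * c + 2 * (B / A) < 1 / 2
  point_narrow : 2 * (B / A) < c

theorem exists_admissibleScales {M : ℕ} {B : ℝ} (hM : 0 < M) (hB : 0 < B)
    (h : B * (4096 * M ^ 5) < 1) : ∃ A c, AdmissibleScales M A B c := by
  have hM₁ : (1 : ℝ) ≤ M := by exact_mod_cast hM
  obtain ⟨κ, hκ⟩ : ∃ κ : ℝ, κ = 1 / M := ⟨_, rfl⟩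
  have hκ₀ : 0 < κ := hκ ▸ by positivity
  have hκ₁ : κ ≤ 1 := hκ ▸ (div_le_one (by positivity)).2 hM₁
  have hMκ : M * κ = 1 := by rw [hκ]; field_simp
  have hκ_pow : κ ^ 4 ≤ κ ^ 2 ∧ κ ^ 3 ≤ 1 :=
    ⟨pow_le_pow_of_le_one hκ₀.le hκ₁ (by norm_num), pow_le_one₀ hκ₀.le hκ₁⟩
  have hB_lt : B < κ ^ 5 / 4096 := by
    rw [hκ, div_pow, one_pow, div_div, lt_div_iff₀ (by positivity)]
    linarith
  have hBA : B / (κ ^ 3 / 128) < κ ^ 2 / 32 := by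
    rw [div_lt_iff₀ (by positivity)]
    linarith [show κ ^ 2 / 32 * (κ ^ 3 / 128) = κ ^ 5 / 4096 by ring]
  have hMB : M * B < κ ^ 4 / 4096 := by
    calc M * B < M * (κ ^ 5 / 4096) := by gcongr
      _ = (M * κ) * κ ^ 4 / 4096 := by ring
      _ = κ ^ 4 / 4096 := by rw [hMκ, one_mul]
  have hMB' : M * (M * B) < κ ^ 3 / 4096 := by
    calc M * (M * B) < M * (κ ^ 4 / 4096) := by gcongr
      _ = (M * κ) * κ ^ 3 / 4096 := by ring
      _ = κ ^ 3 / 4096 := by rw [hMκ, one_mul]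
  refine ⟨κ ^ 3 / 128, κ ^ 2 / 16, by positivity, hB, ?_, ?_, ?_, by linarith⟩
  · calc 4 * M ^ 2 * (κ ^ 2 / 16 + 4 * B) + 2 * (κ ^ 3 / 128)
        = (M * κ) ^ 2 / 4 + 16 * (M * (M * B)) + κ ^ 3 / 64 := by ring
      _ < 1 := by rw [hMκ]; linarith
  · calc 2 * M * (2 * (κ ^ 3 / 128) + 4 * B) = (M * κ) * κ ^ 2 / 32 + 8 * (M * B) := by ring
      _ < κ ^ 2 / 16 := by rw [hMκ]; linarith [pow_pos hκ₀ 2]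
  · calc 2 * M * (κ ^ 2 / 16) + 2 * (B / (κ ^ 3 / 128))
        < (M * κ) * κ / 8 + κ ^ 2 / 16 := by linarith
      _ < 1 / 2 := by rw [hMκ]; nlinarith

namespace AdmissibleScales

variable {α : UnitAddCircle} {X : Finset UnitAddCircle} {M : ℕ} {A B c : ℝ}

theorem B_div_A_pos (hs : AdmissibleScales M A B c) : 0 < B / A := div_pos hs.B_pos hs.A_pos

theorem c_pos (hs : AdmissibleScales M A B c) : 0 < c :=
  (mul_pos two_pos hs.B_div_A_pos).trans hs.point_narrow

theorem mul_norm_zsmul_le_of_cluster (hs : AdmissibleScales M A B c) {T q : ℕ} (hTq : T ≤ q)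
    (hqT : q ≤ 4 * M ^ 2 * T) {n : ℤ} (hn : |(n : ℝ)| * ‖q • α‖ ≤ 2 * A)
    (hclose : T * ‖n • α‖ ≤ c + 4 * B) : T * ‖n • α‖ ≤ 2 * A := by
  have hTq' : (T : ℝ) ≤ q := by exact_mod_cast hTq
  have hqT' : (q : ℝ) ≤ 4 * M ^ 2 * T := by exact_mod_cast hqT
  have hlt : (q : ℝ) * ‖n • α‖ + |(n : ℝ)| * ‖q • α‖ < 1 :=
    calc (q : ℝ) * ‖n • α‖ + |(n : ℝ)| * ‖q • α‖
        ≤ 4 * M ^ 2 * T * ‖n • α‖ + 2 * A := by gcongr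
      _ = 4 * M ^ 2 * (T * ‖n • α‖) + 2 * A := by ring
      _ ≤ 4 * M ^ 2 * (c + 4 * B) + 2 * A := by gcongr
      _ < 1 := hs.cluster_isolated
  have heq : (q : ℝ) * ‖n • α‖ = |(n : ℝ)| * ‖q • α‖ := by
    simpa using mul_norm_zsmul_eq_of_add_lt (α := α) (m := q) (n := n) (by simpa using hlt)
  calc T * ‖n • α‖ ≤ q * ‖n • α‖ := by gcongr
    _ ≤ 2 * A := heq.trans_le hn

theorem exists_Icc_avoiding_clusters (hs : AdmissibleScales M A B c) (hX : X.card < M) {T q : ℕ}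
    (hT : 0 < T) (hTq : T ≤ q) (hqT : q ≤ 4 * M ^ 2 * T) (a : ℝ) :
    ∃ a', Icc a' (a' + c / (2 * M * T)) ⊆ Icc a (a + c / T) ∧
      ∀ y ∈ Icc a' (a' + c / (2 * M * T)), ∀ x ∈ X, ∀ n : ℤ, |(n : ℝ)| * ‖q • α‖ < A →
        2 * B / T < ‖(y : UnitAddCircle) - x - n • α‖ := by
  have hT₁ : (1 : ℝ) ≤ T := by exact_mod_cast hT
  have hM₁ : (1 : ℝ) ≤ M := by exact_mod_cast (Nat.zero_le _).trans_lt hX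
  have hc := hs.c_pos
  have hc_half : c / T ≤ 1 / 2 :=
    (div_le_self hc.le hT₁).trans (by nlinarith [hs.point_isolated, hs.B_div_A_pos])
  refine exists_Icc_subset_forall_lt_norm hX hc_half (by positivity) (le_of_eq (by field_simp))
    (fun n n' hn hn' hle ↦ ?_) a
  have hindex : |((n' - n : ℤ) : ℝ)| * ‖q • α‖ ≤ 2 * A :=
    calc |((n' - n : ℤ) : ℝ)| * ‖q • α‖ ≤ (|(n' : ℝ)| + |(n : ℝ)|) * ‖q • α‖ := by
          push_cast
          gcongr
          exact abs_sub _ _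
      _ ≤ 2 * A := by linarith
  have hclose : T * ‖(n' - n) • α‖ ≤ c + 4 * B :=
    calc T * ‖(n' - n) • α‖ ≤ T * (c / T + 2 * (2 * B / T)) := by gcongr
      _ = c + 4 * B := by field_simp; ring
  have hcluster : ‖(n' - n) • α‖ ≤ 2 * A / T := by
    rw [le_div_iff₀' (by positivity)]
    exact hs.mul_norm_zsmul_le_of_cluster hTq hqT hindex hclose
  calc ‖(n' - n) • α‖ + 2 * (2 * B / T) ≤ 2 * A / T + 2 * (2 * B / T) := by gcongr
    _ = 2 * M * (2 * A + 4 * B) / (2 * M * T) := by field_simp; ring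
    _ < c / (2 * M * T) := by gcongr; exact hs.cluster_narrow

theorem exists_Icc_avoiding_points (hs : AdmissibleScales M A B c) (hX : X.card < M) {q q' : ℕ}
    (hqq' : IsConsecutiveBest α q q') (a : ℝ) :
    ∃ a', Icc a' (a' + c / q') ⊆ Icc a (a + 2 * M * c / q') ∧
      ∀ y ∈ Icc a' (a' + c / q'), ∀ x ∈ X, ∀ n : ℤ, 2 * |n| < q' →
        B / A * ‖q • α‖ < ‖(y : UnitAddCircle) - x - n • α‖ := by
  have hq'₁ : (1 : ℝ) ≤ q' := by exact_mod_cast hqq'.pos.trans hqq'.lt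
  have hc := hs.c_pos
  have hBA := hs.B_div_A_pos
  have hlen_half : 2 * M * c / q' ≤ 1 / 2 :=
    (div_le_self (by positivity) hq'₁).trans (by linarith [hs.point_isolated])
  have hradius : 2 * (B / A * ‖q • α‖) ≤ 2 * (B / A) / q' :=
    calc 2 * (B / A * ‖q • α‖) ≤ 2 * (B / A * (1 / q')) := by gcongr; exact hqq'.norm_le_inv
      _ = 2 * (B / A) / q' := by ring
  refine exists_Icc_subset_forall_lt_norm hX hlen_half (by positivity) (le_of_eq (by ring))
    (fun n n' hn hn' hle ↦ ?_) a
  rcases eq_or_ne n' n with rfl | hne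
  · rw [sub_self, zero_smul, norm_zero, zero_add]
    exact hradius.trans_lt (by gcongr; exact hs.point_narrow)
  · have hsep : ‖q • α‖ ≤ ‖(n' - n) • α‖ :=
      hqq'.norm_le_norm_zsmul (sub_ne_zero.2 hne) (by linarith [abs_sub n' n])
    have hlt : ‖(n' - n) • α‖ < ‖q • α‖ :=
      calc ‖(n' - n) • α‖ ≤ 2 * M * c / q' + 2 * (B / A) / q' := by linarith
        _ = (2 * M * c + 2 * (B / A)) / q' := by ring
        _ < 1 / 2 / q' := by gcongr; exact hs.point_isolated
        _ = 1 / (2 * q') := div_div _ _ _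
        _ ≤ ‖q • α‖ := hqq'.inv_two_mul_le_norm
    exact absurd hsep hlt.not_ge

theorem exists_Icc_refinement (hs : AdmissibleScales M A B c) (hX : X.card < M)
    (hα : ¬IsOfFinAddOrder α) {T : ℕ} (hT : IsBestDenominator α T) (a : ℝ) :
    ∃ T' a', IsBestDenominator α T' ∧ T < T' ∧ Icc a' (a' + c / T') ⊆ Icc a (a + c / T) ∧
      ∀ y ∈ Icc a' (a' + c / T'), ∀ x ∈ X, ∀ n : ℤ, 2 * |n| < T' →
        B ≤ max |(n : ℝ)| (T / 2) * ‖(y : UnitAddCircle) - x - n • α‖ := by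
  have hT₀ := hT.1
  have hM : 0 < M := (Nat.zero_le _).trans_lt hX
  have hTQ : T < 4 * M ^ 2 * T := by nlinarith [Nat.pow_pos (n := 2) hM]
  obtain ⟨q, T', hqQ, hQT', hqT'⟩ := exists_isConsecutiveBest hα (Nat.lt_of_le_of_lt hT₀ hTQ)
  have hTT' := hTQ.trans_le hQT'
  have hTq : T ≤ q := hqT'.le_of_isBestDenominator hT hTT'
  obtain ⟨a₁, hsub₁, hclusters⟩ :=
    hs.exists_Icc_avoiding_clusters (α := α) hX hT₀ hTq hqQ.le a
  obtain ⟨a₂, hsub₂, hpoints⟩ := hs.exists_Icc_avoiding_points hX hqT' a₁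
  have hc := hs.c_pos
  have hA := hs.A_pos
  have hB := hs.B_pos
  have hT'₀ : 0 < T' := hqT'.isBestDenominator.1
  have hlen : 2 * M * c / T' ≤ c / (2 * M * T) := by
    rw [div_le_div_iff₀ (by positivity) (by positivity)]
    calc 2 * M * c * (2 * M * T) = c * (4 * M ^ 2 * T : ℕ) := by push_cast; ring
      _ ≤ c * T' := by gcongr
  have hsub : Icc a₂ (a₂ + c / T') ⊆ Icc a₁ (a₁ + c / (2 * M * T)) :=
    hsub₂.trans (Icc_subset_Icc_right (by gcongr))
  refine ⟨T', a₂, hqT'.isBestDenominator, hTT', hsub.trans hsub₁, fun y hy x hx n hn ↦ ?_⟩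
  rcases lt_or_ge (|(n : ℝ)| * ‖q • α‖) A with hnA | hnA
  · calc B = T / 2 * (2 * B / T) := by field_simp
      _ ≤ max |(n : ℝ)| (T / 2) * ‖(y : UnitAddCircle) - x - n • α‖ := by
        gcongr
        · exact le_max_right _ _
        · exact (hclusters y (hsub hy) x hx n hnA).le
  · calc B = A * (B / A) := by field_simp
      _ ≤ |(n : ℝ)| * ‖q • α‖ * (B / A) := by gcongr
      _ = |(n : ℝ)| * (B / A * ‖q • α‖) := by ring
      _ ≤ max |(n : ℝ)| (T / 2) * ‖(y : UnitAddCircle) - x - n • α‖ := by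
        gcongr
        · exact le_max_left _ _
        · exact (hpoints y hy x hx n hn).le

theorem exists_mem_Icc_forall_twoSidedBadlyApproximable (hs : AdmissibleScales M A B c)
    (hX : X.card < M) (hα : ¬IsOfFinAddOrder α) {T : ℕ} (hT : IsBestDenominator α T) (a : ℝ) :
    ∃ y ∈ Icc a (a + c / T), ∀ x ∈ X, TwoSidedBadlyApproximable B α ((y : UnitAddCircle) - x) := by
  let P (t : ℕ) (K : Set ℝ) : Prop :=
    IsBestDenominator α t ∧ (∃ b, K = Icc b (b + c / t)) ∧ ∀ y ∈ K, ∀ x ∈ X, ∀ n : ℤ,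
      2 * |n| < t → B ≤ max |(n : ℝ)| (T / 2) * ‖(y : UnitAddCircle) - x - n • α‖
  have hcompact (t K) : P t K → IsCompact K := by
    rintro ⟨-, ⟨b, rfl⟩, -⟩
    exact isCompact_Icc
  have hnonempty (t K) : P t K → K.Nonempty := by
    rintro ⟨-, ⟨b, rfl⟩, -⟩
    exact nonempty_Icc.2 (le_add_of_nonneg_right (div_nonneg hs.c_pos.le t.cast_nonneg))
  have hrefine (t K) : P t K → ∃ t' K', P t' K' ∧ t < t' ∧ K' ⊆ K := by
    rintro ⟨ht, ⟨b, rfl⟩, hb⟩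
    obtain ⟨t', b', ht', htt', hsub, hb'⟩ := hs.exists_Icc_refinement hX hα ht b
    refine ⟨t', _, ⟨ht', ⟨b', rfl⟩, fun y hy x hx n hn ↦ ?_⟩, htt', hsub⟩
    rcases lt_or_ge (2 * |n|) (t : ℤ) with hnt | hnt
    · exact hb y (hsub hy) x hx n hnt
    · have htn : (t / 2 : ℝ) ≤ |(n : ℝ)| := by
        rw [div_le_iff₀' two_pos]
        exact_mod_cast hnt
      refine (hb' y hy x hx n hn).trans ?_
      rw [max_eq_left htn]
      gcongr
      exact le_max_left _ _
  obtain ⟨T₁, a₁, hT₁, -, hsub, ha₁⟩ := hs.exists_Icc_refinement hX hα hT a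
  obtain ⟨y, hy, hy_all⟩ := exists_mem_forall_exists_of_refinement hcompact hnonempty hrefine
    (t₀ := T₁) ⟨hT₁, ⟨a₁, rfl⟩, ha₁⟩
  refine ⟨y, hsub hy, fun x hx ↦ ⟨T / 2, fun n ↦ ?_⟩⟩
  obtain ⟨t, K, ⟨-, -, hK⟩, ht, hyK⟩ := hy_all (2 * n.natAbs + 1)
  exact hK y hyK x hx n (by rw [Int.abs_eq_natAbs]; omega)

end AdmissibleScales

theorem dense_setOf_forall_twoSidedBadlyApproximable_of_not_isOfFinAddOrder
    {α : UnitAddCircle} (hα : ¬IsOfFinAddOrder α)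
    {X : Finset UnitAddCircle} {B : ℝ} (hB : 0 < B) (h : B * (4096 * (X.card + 1) ^ 5) < 1) :
    Dense {y | ∀ x ∈ X, TwoSidedBadlyApproximable B α (y - x)} := by
  obtain ⟨A, c, hs⟩ := exists_admissibleScales X.card.succ_pos hB (by exact_mod_cast h)
  have dense_lift : Dense {y : ℝ | ∀ x ∈ X,
      TwoSidedBadlyApproximable B α ((y : UnitAddCircle) - x)} := by
    refine dense_of_exists_between fun a b hab ↦ ?_
    obtain ⟨m, ham, hmb⟩ := exists_between hab
    obtain ⟨N, hN⟩ := exists_nat_gt (c / (b - m))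
    obtain ⟨T, hT, hNT⟩ := exists_isBestDenominator_ge hα N
    have hT₀ : (0 : ℝ) < T := by exact_mod_cast hT.1
    have hlen : c / T < b - m :=
      (div_lt_comm₀ (sub_pos.2 hmb) hT₀).1 (hN.trans_le (by exact_mod_cast hNT))
    obtain ⟨y, hy, hyX⟩ :=
      hs.exists_mem_Icc_forall_twoSidedBadlyApproximable X.card.lt_succ_self hα hT m
    exact ⟨y, hyX, ham.trans_le hy.1, by linarith [hy.2]⟩
  refine (QuotientAddGroup.mk_surjective.denseRange.dense_image
    (AddCircle.continuous_mk' 1) dense_lift).mono ?_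
  exact image_subset_iff.2 fun y hy ↦ hy

theorem dense_setOf_forall_twoSidedBadlyApproximable_of_isOfFinAddOrder
    {α : UnitAddCircle} (hα : IsOfFinAddOrder α)
    (X : Finset UnitAddCircle) (B : ℝ) :
    Dense {y | ∀ x ∈ X, TwoSidedBadlyApproximable B α (y - x)} := by
  let orbits : Set UnitAddCircle :=
    ⋃ x ∈ X, (· - x) ⁻¹' (AddSubgroup.zmultiples α : Set UnitAddCircle)
  have hfinite : orbits.Finite := X.finite_toSet.biUnion fun x _ ↦
    hα.finite_zmultiples.preimage (sub_left_injective.injOn)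
  have : Nontrivial UnitAddCircle :=
    ⟨((1 / 2 : ℝ) : UnitAddCircle), 0, norm_ne_zero_iff.1 (by
      rw [AddCircle.norm_half_period_eq]; norm_num)⟩
  refine (dense_univ.sdiff_finite hfinite).mono fun y hy x hx ↦ ?_
  exact .of_isOfFinAddOrder B hα fun hyx ↦ hy.2 (mem_biUnion hx hyx)

theorem inv_64_pow_mul_lt_one {m : ℕ} (hm : 0 < m) :
    (1 / 64 : ℝ) ^ (3 * m) * (4096 * (m + 1) ^ 5) < 1 := by
  have hlt : 4096 * (m + 1) ^ 5 < 64 ^ (3 * m) :=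
    calc 4096 * (m + 1) ^ 5 ≤ 4096 * (2 ^ m) ^ 5 := by gcongr; exact Nat.lt_two_pow_self
      _ = 2 ^ (12 + 5 * m) := by rw [← pow_mul, pow_add, mul_comm m 5]; norm_num
      _ < 2 ^ (6 * (3 * m)) := Nat.pow_lt_pow_right (by norm_num) (by omega)
      _ = 64 ^ (3 * m) := by rw [pow_mul]; norm_num
  rw [one_div, inv_pow, inv_mul_lt_iff₀ (by positivity), mul_one]
  exact_mod_cast hlt

theorem dense_setOf_forall_twoSidedBadlyApproximable (α : UnitAddCircle)
    {X : Finset UnitAddCircle} {B : ℝ} (hB : 0 < B) (hBX : B ≤ (1 / 64) ^ (3 * X.card)) :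
    Dense {y | ∀ x ∈ X, TwoSidedBadlyApproximable B α (y - x)} := by
  by_cases hα : IsOfFinAddOrder α
  · exact dense_setOf_forall_twoSidedBadlyApproximable_of_isOfFinAddOrder hα X B
  rcases X.eq_empty_or_nonempty with rfl | hX
  · simp
  · exact dense_setOf_forall_twoSidedBadlyApproximable_of_not_isOfFinAddOrder hα hB
      (lt_of_le_of_lt (by gcongr) (inv_64_pow_mul_lt_one hX.card_pos))

/-- Corollary 3.10 of the paper: for any rotation `R_θ`, the set of `k`-tuples of
points of `ℝ/ℤ` that are pairwise `(1/64)^{3(k-1)}`-badly approximable for `R_θ` is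
dense in `(ℝ/ℤ)^k`. -/
theorem dense_pairwise_badly_approximable_tuples (θ : ℝ) (k : ℕ) (hk : 1 ≤ k) :
    Dense {p : Fin k → AddCircle (1 : ℝ) |
      ∀ i j : Fin k, i ≠ j →
        BadlyApproximablePair ((1 / 64 : ℝ) ^ (3 * (k - 1))) θ (p i) (p j)} := by
  let B : ℝ := (1 / 64) ^ (3 * (k - 1))
  have hB : 0 < B := by positivity
  let R (x y : UnitAddCircle) : Prop := TwoSidedBadlyApproximable B (θ : UnitAddCircle) (y - x)
  have : Std.Symm R := ⟨fun x y h ↦ by simpa only [R, neg_sub] using h.neg⟩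
  have dense_extension (X : Finset UnitAddCircle) (hX : X.card < Fintype.card (Fin k)) :
      Dense {y | ∀ x ∈ X, R x y} := by
    rw [Fintype.card_fin] at hX
    exact dense_setOf_forall_twoSidedBadlyApproximable θ hB
      (pow_le_pow_of_le_one (by norm_num) (by norm_num) (by omega))
  exact (dense_setOf_pairwise dense_extension).mono fun p hp i j hij ↦
    (hp hij).badlyApproximablePair hB
end

section
/- Let φ = (1 + √5)/2. There exists B > 0 such that for every ξ ∈ ℝ of the form ξ = (aφ + b)/(cφ + d) with a, b, c, d ∈ ℤ and |ad − bc| = 1, the following hold: ξ is irrational, and there exists N ∈ ℕ such that n·dist(nξ, 0) ≥ B for all integers n ≥ N, where dist(nξ, 0) denotes the distance in ℝ/ℤ from the class of nξ to 0 (equivalently, the distance from nξ to the nearest integer). In other words, the pair (0,0) is B-badly approximable for the rotation R_ξ, with B uniform over all such ξ. -/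
/-!
A number `ξ = (aα + b)/(cα + d)` with `|ad - bc| = 1` is a root of an integral quadratic with the
same discriminant `D` as that of `α`. If `F = A X² + B X Y + C Y²` is the corresponding form and
`e = nξ - m`, then `F(m, n) = e (A e ∓ n √D)`. When `D` is not a square the left side is a nonzero
integer, so `1 ≤ n |e| √D + |A| e²`. Where `n |e|` is below a constant `κ < 1 / √D`, the first term
is at most `κ √D < 1` and the second is `O(1 / n²)`, so `n` is bounded. Only this bound on `n`
depends on the form; `κ` depends on `D` alone.
-/

/-- `ξ` is a root of an integral quadratic polynomial `A X² + B X + C` of discriminant `D`.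
For `D` not a square these are the quadratic irrationals, sorted by the invariant `D` that their
approximation constant depends on. The polynomial may be imprimitive, and `A = 0` is allowed but
forces `D` to be a square. -/
def IsQuadraticRoot {R : Type*} [CommRing R] (D : ℤ) (ξ : R) : Prop :=
  ∃ A B C : ℤ, discrim A B C = D ∧ A * (ξ * ξ) + B * ξ + C = 0

theorem intCast_discrim_eq_sq_of_root {R : Type*} [CommRing R] {A B C : ℤ} {ξ : R}
    (hroot : A * (ξ * ξ) + B * ξ + C = 0) :
    ((discrim A B C : ℤ) : R) = (2 * A * ξ + B) ^ 2 := by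
  rw [← discrim_eq_sq_of_quadratic_eq_zero hroot]
  simp [discrim]

theorem IsQuadraticRoot.isSquare_of_rat {D : ℤ} {q : ℚ} (hq : IsQuadraticRoot D q) :
    IsSquare D := by
  obtain ⟨A, B, C, rfl, hroot⟩ := hq
  rw [← Rat.isSquare_intCast_iff, intCast_discrim_eq_sq_of_root hroot]
  exact IsSquare.sq _

theorem IsQuadraticRoot.irrational {D : ℤ} {ξ : ℝ} (hξ : IsQuadraticRoot D ξ)
    (hD : ¬IsSquare D) : Irrational ξ := by
  rintro ⟨q, rfl⟩
  obtain ⟨A, B, C, hdiscrim, hroot⟩ := hξ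
  have hq : IsQuadraticRoot D q := ⟨A, B, C, hdiscrim, by exact_mod_cast hroot⟩
  exact hD hq.isSquare_of_rat

theorem IsQuadraticRoot.moebius {K : Type*} [Field K] {D : ℤ} {α : K}
    (hα : IsQuadraticRoot D α) (a b : ℤ) {c d : ℤ} (hden : c * α + d ≠ 0) :
    IsQuadraticRoot ((a * d - b * c) ^ 2 * D) ((a * α + b) / (c * α + d)) := by
  obtain ⟨A, B, C, rfl, hroot⟩ := hα
  -- Coefficients of `A (dX - b)² + B (dX - b) (a - cX) + C (a - cX)²`, from the inverse matrix.
  refine ⟨A * d ^ 2 - B * d * c + C * c ^ 2,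
    -2 * A * b * d + B * (a * d + b * c) - 2 * C * a * c,
    A * b ^ 2 - B * a * b + C * a ^ 2, by simp only [discrim]; ring, ?_⟩
  push_cast
  field_simp
  linear_combination ((a : K) * d - b * c) ^ 2 * hroot

theorem quadraticForm_ne_zero_of_not_isSquare_discrim {A B C m n : ℤ}
    (hD : ¬IsSquare (discrim A B C)) (hn : n ≠ 0) :
    A * m ^ 2 + B * m * n + C * n ^ 2 ≠ 0 := by
  intro hzero
  have hn' : (n : ℚ) ≠ 0 := by exact_mod_cast hn
  have hzero' : (A * m ^ 2 + B * m * n + C * n ^ 2 : ℚ) = 0 := by exact_mod_cast hzero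
  have hroot : IsQuadraticRoot (discrim A B C) (m / n : ℚ) := by
    refine ⟨A, B, C, rfl, ?_⟩
    field_simp
    linear_combination hzero'
  exact hD hroot.isSquare_of_rat

theorem quadraticForm_eq_mul_of_root {R : Type*} [CommRing R] {A B C ξ : R}
    (hroot : A * (ξ * ξ) + B * ξ + C = 0) (m n : R) :
    A * m ^ 2 + B * m * n + C * n ^ 2 =
      (n * ξ - m) * (A * (n * ξ - m) - n * (2 * A * ξ + B)) := by
  linear_combination n ^ 2 * hroot

theorem one_le_abs_mul_of_quadratic_root {A B C : ℤ} {ξ : ℝ}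
    (hD : ¬IsSquare (discrim A B C)) (hroot : A * (ξ * ξ) + B * ξ + C = 0)
    (m : ℤ) {n : ℤ} (hn : 0 < n) :
    1 ≤ |n * ξ - m| * (|(A : ℝ)| * |n * ξ - m| + n * √(discrim A B C : ℤ)) := by
  have hsqrt : |2 * A * ξ + B| = √(discrim A B C : ℤ) := by
    rw [intCast_discrim_eq_sq_of_root hroot, Real.sqrt_sq_eq_abs]
  have hn' : (0 : ℝ) < n := by exact_mod_cast hn
  calc (1 : ℝ) ≤ |(A : ℝ) * m ^ 2 + B * m * n + C * n ^ 2| := by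
        exact_mod_cast Int.one_le_abs (quadraticForm_ne_zero_of_not_isSquare_discrim hD hn.ne')
    _ = |n * ξ - m| * |A * (n * ξ - m) - n * (2 * A * ξ + B)| := by
        rw [quadraticForm_eq_mul_of_root hroot, abs_mul]
    _ ≤ |n * ξ - m| * (|A * (n * ξ - m)| + |n * (2 * A * ξ + B)|) := by
        gcongr
        exact abs_sub _ _
    _ = |n * ξ - m| * (|(A : ℝ)| * |n * ξ - m| + n * √(discrim A B C : ℤ)) := by
        rw [abs_mul (A : ℝ), abs_mul (n : ℝ), abs_of_pos hn', hsqrt]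

theorem IsQuadraticRoot.exists_forall_le_mul_dist {D : ℤ} {ξ : ℝ} (hξ : IsQuadraticRoot D ξ)
    (hD : ¬IsSquare D) {κ : ℝ} (hκ : κ * √D < 1) :
    ∃ N : ℕ, ∀ n : ℤ, (N : ℤ) ≤ n → κ ≤ n * dist (n • (ξ : AddCircle (1 : ℝ))) 0 := by
  obtain ⟨A, B, C, rfl, hroot⟩ := hξ
  obtain ⟨N, hN⟩ := exists_nat_gt (|(A : ℝ)| * κ / (1 - κ * √(discrim A B C : ℤ)))
  rw [div_lt_iff₀ (sub_pos.mpr hκ)] at hN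
  refine ⟨N + 1, fun n hNn => ?_⟩
  have hn : 0 < n := by lia
  have hn' : (0 : ℝ) < n := by exact_mod_cast hn
  have hNn' : (N : ℝ) ≤ n := by exact_mod_cast (by lia : (N : ℤ) ≤ n)
  rw [dist_zero_right, ← AddCircle.coe_zsmul, UnitAddCircle.norm_eq, zsmul_eq_mul]
  set δ := √(discrim A B C : ℤ)
  set e := |n * ξ - round (n * ξ)|
  have hbound : 1 ≤ e * (|(A : ℝ)| * e + n * δ) :=
    one_le_abs_mul_of_quadratic_root hD hroot (round (n * ξ)) hn
  have he_nonneg : 0 ≤ e := abs_nonneg _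
  have he_le_one : e ≤ 1 := (abs_sub_round _).trans (by norm_num)
  by_contra! hlt
  have hκ_pos : 0 < κ := (mul_nonneg hn'.le he_nonneg).trans_lt hlt
  refine lt_irrefl (n : ℝ) ?_
  calc
    (n : ℝ) ≤ n * (e * (|(A : ℝ)| * e + n * δ)) := le_mul_of_one_le_right hn'.le hbound
    _ = |(A : ℝ)| * (n * e) * e + n * (n * e) * δ := by ring
    _ ≤ |(A : ℝ)| * κ * 1 + n * κ * δ := by gcongr
    _ < N * (1 - κ * δ) + n * (κ * δ) := by linarith
    _ ≤ n * (1 - κ * δ) + n * (κ * δ) := by gcongr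
    _ = n := by ring

theorem golden_ratio_rotations_uniformly_badly_approximable_general {D : ℤ} (hD : ¬IsSquare D)
    {α : ℝ} (hα : IsQuadraticRoot D α) {κ : ℝ} (hκ : κ * √D < 1) {ξ : ℝ}
    (hξ : ∃ a b c d : ℤ, |a * d - b * c| = 1 ∧ ξ = (a * α + b) / (c * α + d)) :
    Irrational ξ ∧ ∃ N : ℕ, ∀ n : ℤ, (N : ℤ) ≤ n →
      κ ≤ n * dist (n • (ξ : AddCircle (1 : ℝ))) 0 := by
  obtain ⟨a, b, c, d, hdet, rfl⟩ := hξ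
  have hden : c * α + d ≠ 0 := by
    rcases eq_or_ne c 0 with rfl | hc
    · have hd : d ≠ 0 := by
        rintro rfl
        simp at hdet
      simpa using hd
    · exact (((hα.irrational hD).intCast_mul hc).add_intCast d).ne_zero
  have hroot : IsQuadraticRoot D ((a * α + b) / (c * α + d)) := by
    simpa only [← sq_abs (a * d - b * c), hdet, one_pow, one_mul] using hα.moebius a b hden
  exact ⟨hroot.irrational hD, hroot.exists_forall_le_mul_dist hD hκ⟩

theorem isQuadraticRoot_goldenRatio : IsQuadraticRoot 5 Real.goldenRatio := by
  refine ⟨1, -1, -1, by norm_num [discrim], ?_⟩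
  push_cast
  linear_combination Real.goldenRatio_sq

/-- Claim in the proof of Proposition 3.12 of the paper: there is a uniform `B > 0`
such that for every real `ξ = (aφ + b)/(cφ + d)` with `a, b, c, d ∈ ℤ`,
`|ad - bc| = 1` and `φ = (1 + √5)/2` (i.e. every `ξ` whose continued fraction
expansion terminates in all 1's), `ξ` is irrational and the pair `(0,0)` is
`B`-badly approximable for the rotation `R_ξ`:
there is `N ∈ ℕ` with `n · dist(nξ, 0) ≥ B` in `ℝ/ℤ` for all integers `n ≥ N`. -/
theorem golden_ratio_rotations_uniformly_badly_approximable :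
    ∃ B : ℝ, 0 < B ∧
      ∀ ξ : ℝ,
        (∃ a b c d : ℤ, |a * d - b * c| = 1 ∧
          ξ = ((a : ℝ) * ((1 + Real.sqrt 5) / 2) + (b : ℝ)) /
              ((c : ℝ) * ((1 + Real.sqrt 5) / 2) + (d : ℝ))) →
        Irrational ξ ∧
        ∃ N : ℕ, ∀ n : ℤ, (N : ℤ) ≤ n →
          B ≤ (n : ℝ) * dist (n • ((ξ : ℝ) : AddCircle (1 : ℝ))) 0 := by
  have hκ : 1 / 3 * √(5 : ℤ) < 1 := by
    have : √5 < 3 := (Real.sqrt_lt' (by norm_num)).mpr (by norm_num)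
    push_cast
    linarith
  exact ⟨1 / 3, by norm_num, fun _ => golden_ratio_rotations_uniformly_badly_approximable_general
    (by norm_num) isQuadraticRoot_goldenRatio hκ⟩
end

section
/- Let X be a topological space, S ⊆ X a subset, and U : S → ℕ → Set X a family of sets such that: (a) for every p ∈ S and n ∈ ℕ, U(p,n) is open in X and p ∈ U(p,n); (b) for every p ∈ S and n ∈ ℕ, U(p,n+1) ⊆ U(p,n); (c) for every p ∈ S, the sets U(p,n), n ∈ ℕ, form a neighbourhood basis at p, i.e. every open set containing p contains some U(p,n); (d) for all p, q ∈ S and n ∈ ℕ, if q ∈ U(p,n) then U(q,i) ⊆ U(p,i) for all i ≤ n; (e) for every p ∈ S and n ∈ ℕ there exists m ≥ n such that every q ∈ S ∩ U(p,m) can be joined to p by a path contained in S ∩ U(p,n), i.e. there is a continuous c : [0,1] → X with c(0) = p, c(1) = q, and image contained in S ∩ U(p,n). Then for every p ∈ S and every n ∈ ℕ there is a set W with p ∈ W ⊆ S ∩ U(p,n) that is open in the subspace topology of S and path-connected; consequently S (with the subspace topology) is locally path-connected. -/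
/-!
Suppose that for every neighbourhood `V` of a point `p` of `S`, all points of `S` close to `p` can
be joined to `p` inside `S ∩ V`. Then the path component of `p` in `S ∩ V` is a path-connected
neighbourhood of `p` in `S`, though perhaps not an open one. Having such neighbourhoods at every
point already makes `S` locally path-connected, so path components of open subsets of `S` are open.
-/

open Topology

section

variable {X : Type*} [TopologicalSpace X] {S V : Set X}

theorem joinedIn_preimage_val_iff {p q : S} :
    JoinedIn (Subtype.val ⁻¹' V : Set S) p q ↔ JoinedIn (S ∩ V) (p : X) q := by
  have joinedIn_image_iff (hp : (p : X) ∈ V) (hq : (q : X) ∈ V) :=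
    IsInducing.subtypeVal.joinedIn_image (F := Subtype.val ⁻¹' V) hp hq
  rw [Subtype.image_preimage_coe] at joinedIn_image_iff
  exact ⟨fun h ↦ (joinedIn_image_iff h.source_mem h.target_mem).2 h,
    fun h ↦ (joinedIn_image_iff h.source_mem.2 h.target_mem.2).1 h⟩

theorem pathComponentIn_preimage_val_mem_nhds_iff {p : S} :
    pathComponentIn (Subtype.val ⁻¹' V : Set S) p ∈ 𝓝 p ↔
      ∀ᶠ q in 𝓝[S] (p : X), JoinedIn (S ∩ V) p q := by
  simp only [← eventually_nhds_subtype_iff, ← joinedIn_preimage_val_iff]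
  rfl

theorem locallyPathConnectedSpace_coe_iff_eventually_joinedIn :
    LocallyPathConnectedSpace S ↔
      ∀ (p : S) (V : Set X), IsOpen V → (p : X) ∈ V →
        ∀ᶠ q in 𝓝[S] (p : X), JoinedIn (S ∩ V) p q := by
  simp only [locallyPathConnectedSpace_iff_pathComponentIn_mem_nhds, isOpen_induced_iff,
    forall_exists_index, and_imp, forall_apply_eq_imp_iff₂, Set.mem_preimage,
    pathComponentIn_preimage_val_mem_nhds_iff]

theorem exists_isPathConnected_subset_of_mem_nhdsWithin [LocallyPathConnectedSpace S] {p : S}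
    (hV : V ∈ 𝓝[S] (p : X)) :
    ∃ W : Set X, (p : X) ∈ W ∧ W ⊆ S ∩ V ∧
      IsOpen (Subtype.val ⁻¹' W : Set S) ∧ IsPathConnected W := by
  obtain ⟨W, ⟨hW_open, hpW, hW_conn⟩, hWV⟩ :=
    (isOpen_isPathConnected_basis p).mem_iff.1 (preimage_coe_mem_nhds_subtype.2 hV)
  refine ⟨Subtype.val '' W, Set.mem_image_of_mem _ hpW, ?_, ?_,
    IsInducing.subtypeVal.isPathConnected_iff.1 hW_conn⟩
  · rw [← Subtype.image_preimage_coe]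
    exact Set.image_mono hWV
  · rwa [Set.preimage_image_eq _ Subtype.val_injective]

end

theorem locally_path_connected_of_nested_neighbourhoods_general
    {X ι : Type*} [TopologicalSpace X] (S : Set X) (U : S → ι → Set X)
    (hsmall : ∀ (p : S) (V : Set X), IsOpen V → (p : X) ∈ V → ∃ i, U p i ⊆ V)
    (hjoin : ∀ (p : S) (i : ι), ∀ᶠ q in 𝓝[S] (p : X), JoinedIn (S ∩ U p i) p q) :
    (∀ (p : S) (i : ι), ∃ W : Set X,
      (p : X) ∈ W ∧ W ⊆ S ∩ U p i ∧
      IsOpen (Subtype.val ⁻¹' W : Set S) ∧ IsPathConnected W) ∧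
    LocallyPathConnectedSpace S := by
  have locallyPathConnected : LocallyPathConnectedSpace S := by
    refine locallyPathConnectedSpace_coe_iff_eventually_joinedIn.2 fun p V hV hpV ↦ ?_
    obtain ⟨i, hi⟩ := hsmall p V hV hpV
    exact (hjoin p i).mono fun q hq ↦ hq.mono (Set.inter_subset_inter_right S hi)
  have U_mem_nhdsWithin (p : S) (i : ι) : U p i ∈ 𝓝[S] (p : X) :=
    (hjoin p i).mono fun q hq ↦ hq.target_mem.2
  exact ⟨fun p i ↦ exists_isPathConnected_subset_of_mem_nhdsWithin (U_mem_nhdsWithin p i),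
    locallyPathConnected⟩

/-- Abstract mechanism of Section 6 of the paper (local path-connectivity).  Given a
subset `S` of a topological space `X` and, for each `p ∈ S`, a decreasing family of
open neighbourhoods `U p n` forming a neighbourhood basis at `p`, satisfying the
nesting compatibility (d) and the path-joining property (e), every `p ∈ S` and `n`
admit a path-connected set `W` with `p ∈ W ⊆ S ∩ U p n` which is open in the
subspace topology of `S`; consequently `S` is locally path-connected. -/
theorem locally_path_connected_of_nested_neighbourhoods
    {X : Type*} [TopologicalSpace X] (S : Set X) (U : S → ℕ → Set X)
    (ha : ∀ (p : S) (n : ℕ), IsOpen (U p n) ∧ (p : X) ∈ U p n)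
    (hb : ∀ (p : S) (n : ℕ), U p (n + 1) ⊆ U p n)
    (hc : ∀ (p : S) (V : Set X), IsOpen V → (p : X) ∈ V → ∃ n : ℕ, U p n ⊆ V)
    (hd : ∀ (p q : S) (n : ℕ), (q : X) ∈ U p n → ∀ i ≤ n, U q i ⊆ U p i)
    (he : ∀ (p : S) (n : ℕ), ∃ m : ℕ, n ≤ m ∧
      ∀ q : S, (q : X) ∈ U p m → JoinedIn (S ∩ U p n) (p : X) (q : X)) :
    (∀ (p : S) (n : ℕ), ∃ W : Set X,
      (p : X) ∈ W ∧ W ⊆ S ∩ U p n ∧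
      IsOpen (Subtype.val ⁻¹' W : Set S) ∧ IsPathConnected W) ∧
    LocPathConnectedSpace S := by
  refine locally_path_connected_of_nested_neighbourhoods_general S U hc fun p n ↦ ?_
  obtain ⟨m, -, hm⟩ := he p n
  exact mem_nhdsWithin.2 ⟨U p m, (ha p m).1, (ha p m).2, fun q hq ↦ hm ⟨q, hq.2⟩ hq.1⟩
end
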